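/- For any 𝓑 ⊆ ℕ, the topological entropy satisfies h(X_η) ≥ d̄(F_𝓑) − d̄(F_{𝓑*}). If in addition the subshift X_{η*} is uniquely ergodic (in particular if η* is a regular Toeplitz sequence), then the natural density d(F_{𝓑*}) exists and h(X_η) = d̄(F_𝓑) − d(F_{𝓑*}). -/

import Mathlib

/-!
Write `F_B` for the `B`-free integers and `d̄` for the upper density.

**Lower bound.** By the theorem of Davenport and Erdős (`davenport_erdos`), the upper density of `F_B` is
approximated by the densities of the periodic sets `F_{B_K}`, `B_K = {b ∈ B | b ≤ K}`. Its proof compares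
`F_B` with the probability weights `k ^ (-s) / ζ(s)` as `s → 1`. Choose an invariant mean `D` on `ℤ`, a limit
of averages along an ultrafilter, with `D(F_B) = d̄(F_B)` (`exists_mean`). The points of `F_B` divisible by an
element `d ≤ K` of `Dset B` have mean at least `d̄(F_B) - d̄(F_{B*}) - ε` for large `K`, so in some window of
length `N` a set `U` of at least `N` times that many of them occurs with positive mean. Any such point can be
turned into a zero of `η` without affecting the remaining points of `U` (`kill_step`): if `d * a ∈ B` with `a`
coprime to a highly divisible `Q`, impose divisibility by `d * a` at that position. Hence all `2 ^ |U|`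
patterns on `U` occur.

**Unique ergodicity.** If `X_{η*}` carries one invariant probability measure, then the frequency of ones of
`η*` in windows of length `n` converges to a number `p` uniformly in the position of the window
(`uniform_density`): a weak-* limit of empirical measures along bad windows would be a second invariant
measure. In particular `F_{B*}` has natural density `p`.

**Upper bound.** Let `E1 = F_{B_K}` and `E2 = F_{C_K}`, where `C = B ∪ Dset B` has the same free integers as
`B*`. Both are periodic modulo `P = K!`, and `F_{B*} ⊆ E2 ⊆ E1`, `F_{B*} ⊆ F_B ⊆ E1`. A window of `F_B` is
determined by its phase modulo `P`, its trace on `E1 \ E2`, and the part of `E2` it misses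
(`count_blocks`). Since `F_{B*}` has almost the density of `E2` in every long window, that missing part
has at most `δ n` elements for a small `δ`, which leaves subexponentially many choices as `δ → 0`
(`smallSets_card`), while `E1 \ E2` has at most `(d̄(F_B) - p + ε) n` points in the window (`entropy_le`).
-/

open MeasureTheory Filter Topology
open scoped Classical

noncomputable section
namespace BFree


def cnt (A : Set ℤ) (L : ℕ) : ℝ := ∑ n ∈ Finset.Icc (1:ℤ) (L:ℤ), if n ∈ A then (1:ℝ) else 0

def natDensity (A : Set ℤ) (d : ℝ) : Prop := Tendsto (fun L : ℕ => cnt A L / L) atTop (𝓝 d)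

def upperDensity (A : Set ℤ) : ℝ := atTop.limsup fun L : ℕ => cnt A L / L

def lowerDensity (A : Set ℤ) : ℝ := atTop.liminf fun L : ℕ => cnt A L / L

def logDensity (A : Set ℤ) (d : ℝ) : Prop :=
  Tendsto (fun L : ℕ =>
      (∑ n ∈ Finset.Icc (1:ℤ) (L:ℤ), if n ∈ A then (n:ℝ)⁻¹ else 0) / Real.log L)
    atTop (𝓝 d)

def MB (B : Set ℕ) : Set ℤ := {n : ℤ | ∃ b ∈ B, (b:ℤ) ∣ n}

def FB (B : Set ℕ) : Set ℤ := {n : ℤ | n ∉ MB B}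

def eta (B : Set ℕ) : ℤ → Bool := fun n => if n ∈ FB B then true else false

def shift (x : ℤ → Bool) : ℤ → Bool := fun n => x (n + 1)

def shiftn (k : ℕ) (x : ℤ → Bool) : ℤ → Bool := fun n => x (n + (k:ℤ))

def orbitClosure (x : ℤ → Bool) : Set (ℤ → Bool) :=
  closure {y | ∃ m : ℤ, y = fun n => x (n + m)}

def Xeta (B : Set ℕ) : Set (ℤ → Bool) := orbitClosure (eta B)

def InvM (X : Set (ℤ → Bool)) : Set (Measure (ℤ → Bool)) :=
  {μ | IsProbabilityMeasure μ ∧ μ.map shift = μ ∧ μ X = 1}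

def primPart (S : Set ℕ) : Set ℕ := {b ∈ S | ∀ b' ∈ S, b' ∣ b → b' = b}

def Dset (B : Set ℕ) : Set ℕ :=
  {d | ∃ A : Set ℕ, A.Infinite ∧ (∀ a ∈ A, 0 < a) ∧ A.Pairwise Nat.Coprime ∧ ∀ a ∈ A, d * a ∈ B}

def Bstar (B : Set ℕ) : Set ℕ := primPart (B ∪ Dset B)

def etaStar (B : Set ℕ) : ℤ → Bool := eta (Bstar B)

def Behrend (A : Set ℕ) : Prop := (∀ a ∈ A, 0 < a) ∧ logDensity (MB A) 1

def Cset (B : Set ℕ) : Set ℕ := {c | ∃ A : Set ℕ, Behrend A ∧ ∀ a ∈ A, c * a ∈ B}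

def Bprime (B : Set ℕ) : Set ℕ := primPart (B ∪ Cset B)

def etaPrime (B : Set ℕ) : ℤ → Bool := eta (Bprime B)

def Taut (B : Set ℕ) : Prop :=
  ∀ b ∈ B, ∃ d1 d2 : ℝ, logDensity (MB (B \ {b})) d1 ∧ logDensity (MB B) d2 ∧ d1 < d2

def Per (x : ℤ → Bool) (s : ℕ) : Set ℤ := {i | ∀ k : ℤ, x (i + (s:ℤ) * k) = x i}

def IsToeplitz (x : ℤ → Bool) : Prop := ∀ i : ℤ, ∃ s : ℕ, 0 < s ∧ i ∈ Per x s

def RegularToeplitz (x : ℤ → Bool) : Prop :=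
  IsToeplitz x ∧ ∃ δ : ℕ → ℝ,
    (∀ r : ℕ, natDensity (⋃ s ∈ Finset.Icc 1 r, Per x s) (δ r)) ∧ Tendsto δ atTop (𝓝 1)

def QuasiGeneric (ℓ : ℕ → ℕ) (x : ℤ → Bool) (ν : Measure (ℤ → Bool)) : Prop :=
  ∀ f : C((ℤ → Bool), ℝ),
    Tendsto (fun i => (∑ n ∈ Finset.Icc 1 (ℓ i), f (shiftn n x)) / (ℓ i : ℝ)) atTop
      (𝓝 (∫ y, f y ∂ν))

def RealizesLowerDensity (A : Set ℤ) (ℓ : ℕ → ℕ) : Prop :=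
  Tendsto ℓ atTop atTop ∧ Tendsto (fun i => cnt A (ℓ i) / (ℓ i : ℝ)) atTop (𝓝 (lowerDensity A))

def IsMirsky (B : Set ℕ) (ν : Measure (ℤ → Bool)) : Prop :=
  IsProbabilityMeasure ν ∧ ∀ ℓ : ℕ → ℕ, RealizesLowerDensity (MB B) ℓ → QuasiGeneric ℓ (eta B) ν

def blocks (X : Set (ℤ → Bool)) (n : ℕ) : Set (Fin n → Bool) :=
  {w | ∃ x ∈ X, ∃ m : ℤ, ∀ i : Fin n, x (m + (i:ℤ)) = w i}

def pCount (X : Set (ℤ → Bool)) (n : ℕ) : ℕ := (blocks X n).ncard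

def topEnt (X : Set (ℤ → Bool)) : ℝ :=
  atTop.limsup fun n : ℕ => Real.logb 2 (pCount X n) / n

def cylinder {n : ℕ} (w : Fin n → Bool) : Set (ℤ → Bool) := {x | ∀ i : Fin n, x ((i:ℕ):ℤ) = w i}

def blockEntropy (μ : Measure (ℤ → Bool)) (n : ℕ) : ℝ :=
  -∑ w : Fin n → Bool, ((μ (cylinder w)).toReal * Real.logb 2 (μ (cylinder w)).toReal)

def measEnt (μ : Measure (ℤ → Bool)) : ℝ := atTop.liminf fun n : ℕ => blockEntropy μ n / n

/-! ### Indicators, counting, and the theorem of Davenport and Erdős -/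

/-- Indicator of `A` with real values. -/
def ind (A : Set ℤ) (n : ℤ) : ℝ := if n ∈ A then 1 else 0

lemma ind_nonneg (A : Set ℤ) (n : ℤ) : 0 ≤ ind A n := by unfold ind; split_ifs <;> norm_num
lemma ind_le_one (A : Set ℤ) (n : ℤ) : ind A n ≤ 1 := by unfold ind; split_ifs <;> norm_num
lemma ind_of_mem {A : Set ℤ} {n : ℤ} (h : n ∈ A) : ind A n = 1 := if_pos h
lemma ind_of_notMem {A : Set ℤ} {n : ℤ} (h : n ∉ A) : ind A n = 0 := if_neg h

lemma cnt_eq_Ioc (A : Set ℤ) (L : ℕ) : cnt A L = ∑ n ∈ Finset.Ioc 0 L, ind A (n : ℤ) := by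
  unfold cnt
  symm
  refine Finset.sum_bij (fun n _ => (n : ℤ)) ?_ ?_ ?_ ?_
  · intro a ha; simp at ha ⊢; omega
  · intro a _ b _ h; exact_mod_cast h
  · intro b hb
    simp at hb
    refine ⟨b.toNat, ?_, ?_⟩
    · simp; omega
    · simp; omega
  · intro a _; rfl

lemma cnt_eq_range (A : Set ℤ) (L : ℕ) :
    cnt A L = ∑ k ∈ Finset.range L, ind A ((k + 1 : ℕ) : ℤ) := by
  rw [cnt_eq_Ioc]
  induction L with
  | zero => simp
  | succ n ih => rw [Finset.sum_range_succ, ← ih, ← Finset.insert_Ioc_right_eq_Ioc_add_one (by simp),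
      Finset.sum_insert (by simp), add_comm]

lemma cnt_nonneg (A : Set ℤ) (L : ℕ) : 0 ≤ cnt A L := by
  rw [cnt_eq_Ioc]; exact Finset.sum_nonneg fun n _ => ind_nonneg A n

lemma cnt_le (A : Set ℤ) (L : ℕ) : cnt A L ≤ L := by
  rw [cnt_eq_Ioc]
  calc ∑ n ∈ Finset.Ioc 0 L, ind A (n : ℤ) ≤ ∑ n ∈ Finset.Ioc 0 L, (1 : ℝ) :=
        Finset.sum_le_sum fun n _ => ind_le_one A n
    _ = L := by simp

/-- The completely multiplicative weight `n ↦ n ^ (1 - s)`. -/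
def pw (s : ℝ) : ArithmeticFunction ℝ := ⟨fun n => if n = 0 then 0 else (n : ℝ) ^ (1 - s), by simp⟩

/-- The Dirichlet inverse of `pw s`. -/
def gm (s : ℝ) : ArithmeticFunction ℝ :=
  ArithmeticFunction.pmul ((ArithmeticFunction.moebius : ArithmeticFunction ℤ) : ArithmeticFunction ℝ) (pw s)

/-- The function `c` determined by `pw s * c = 1` (Dirichlet convolution, the right-hand side being
the constant function); for `s > 1` it takes values in `[0, 1]`. -/
def cc (s : ℝ) : ArithmeticFunction ℝ :=
  gm s * ((ArithmeticFunction.zeta : ArithmeticFunction ℕ) : ArithmeticFunction ℝ)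

lemma pw_apply {s : ℝ} {n : ℕ} (h : n ≠ 0) : pw s n = (n : ℝ) ^ (1 - s) := by
  simp [pw, h]

lemma pw_nonneg (s : ℝ) (n : ℕ) : 0 ≤ pw s n := by
  simp only [pw, ArithmeticFunction.coe_mk]; split_ifs <;> positivity

lemma pw_le_one {s : ℝ} (hs : 1 < s) (n : ℕ) : pw s n ≤ 1 := by
  simp only [pw, ArithmeticFunction.coe_mk]; split_ifs with h
  · norm_num
  · apply Real.rpow_le_one_of_one_le_of_nonpos
    · exact_mod_cast Nat.one_le_iff_ne_zero.2 h
    · linarith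

lemma pw_mul (s : ℝ) (m n : ℕ) : pw s (m * n) = pw s m * pw s n := by
  simp only [pw, ArithmeticFunction.coe_mk]
  by_cases hm : m = 0
  · simp [hm]
  by_cases hn : n = 0
  · simp [hn]
  simp only [hm, hn, mul_eq_zero, or_self, if_false]
  push_cast
  rw [Real.mul_rpow (by positivity) (by positivity)]

lemma pw_isMult (s : ℝ) : (pw s).IsMultiplicative :=
  ⟨by simp [pw], fun {m n} _ => pw_mul s m n⟩

lemma gm_isMult (s : ℝ) : (gm s).IsMultiplicative :=
  ArithmeticFunction.isMultiplicative_moebius.intCast.pmul (pw_isMult s)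

lemma cc_isMult (s : ℝ) : (cc s).IsMultiplicative :=
  (gm_isMult s).mul ArithmeticFunction.isMultiplicative_zeta.natCast

lemma pw_mul_gm (s : ℝ) : pw s * gm s = 1 := by
  ext n
  have h1 : (pw s * gm s) n = pw s n * (((ArithmeticFunction.moebius : ArithmeticFunction ℤ) : ArithmeticFunction ℝ) * ((ArithmeticFunction.zeta : ArithmeticFunction ℕ) : ArithmeticFunction ℝ)) n := by
    rw [ArithmeticFunction.mul_apply, mul_comm ((ArithmeticFunction.moebius : ArithmeticFunction ℤ) : ArithmeticFunction ℝ), ArithmeticFunction.mul_apply, Finset.mul_sum]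
    refine Finset.sum_congr rfl fun x hx => ?_
    obtain ⟨h, hn⟩ := Nat.mem_divisorsAntidiagonal.1 hx
    have : x.1 ≠ 0 := by rintro h0; simp [h0] at h; exact hn h.symm
    rw [← h, pw_mul, gm, ArithmeticFunction.pmul_apply]
    simp [this]
    ring
  rw [h1, ArithmeticFunction.coe_moebius_mul_coe_zeta]
  by_cases hn : n = 1
  · subst hn; simp [pw]
  · simp [hn]

lemma pw_mul_cc (s : ℝ) : pw s * cc s = ((ArithmeticFunction.zeta : ArithmeticFunction ℕ) : ArithmeticFunction ℝ) := by
  rw [cc, ← mul_assoc, pw_mul_gm, one_mul]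

lemma cc_nonneg {s : ℝ} (hs : 1 < s) (n : ℕ) : 0 ≤ cc s n := by
  by_cases hn : n = 0
  · simp [hn]
  rw [(cc_isMult s).multiplicative_factorization _ hn]
  refine Finset.prod_nonneg fun p hp => ?_
  have hp' : p.Prime := Nat.prime_of_mem_primeFactors hp
  have hk : n.factorization p ≠ 0 := Finsupp.mem_support_iff.1 hp
  obtain ⟨k, hk⟩ := Nat.exists_eq_succ_of_ne_zero hk
  simp only [hk, Nat.succ_eq_add_one]
  rw [cc, ArithmeticFunction.coe_mul_zeta_apply, Nat.sum_divisors_prime_pow hp', Finset.sum_range_succ',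
    Finset.sum_range_succ']
  rw [Finset.sum_eq_zero]
  · simp [gm, ArithmeticFunction.moebius_apply_prime hp']
    simpa [pw] using pw_le_one hs p
  · intro i _
    rw [gm, ArithmeticFunction.pmul_apply, ArithmeticFunction.intCoe_apply,
      ArithmeticFunction.moebius_apply_prime_pow hp' (by omega)]
    simp

lemma pw_cc_sum (s : ℝ) {n : ℕ} (hn : n ≠ 0) :
    ∑ x ∈ n.divisorsAntidiagonal, pw s x.1 * cc s x.2 = 1 := by
  rw [← ArithmeticFunction.mul_apply, pw_mul_cc]; simp [hn]

lemma cc_le_one {s : ℝ} (hs : 1 < s) (n : ℕ) : cc s n ≤ 1 := by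
  by_cases hn : n = 0
  · simp [hn]
  rw [← pw_cc_sum s hn]
  have := Finset.single_le_sum (f := fun x : ℕ × ℕ => pw s x.1 * cc s x.2)
    (s := n.divisorsAntidiagonal) (fun x _ => mul_nonneg (pw_nonneg _ _) (cc_nonneg hs _))
    (a := (1, n)) (by simp [hn])
  simpa [pw] using this

/-- Partial sums of `cc s`. -/
def CC (s : ℝ) (N : ℕ) : ℝ := ∑ m ∈ Finset.Ioc 0 N, cc s m

lemma CC_nonneg {s : ℝ} (hs : 1 < s) (N : ℕ) : 0 ≤ CC s N :=
  Finset.sum_nonneg fun m _ => cc_nonneg hs m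

lemma CC_le {s : ℝ} (hs : 1 < s) (N : ℕ) : CC s N ≤ N := by
  refine (Finset.sum_le_sum fun m _ => cc_le_one hs m).trans ?_
  simp

lemma CC_eq (s : ℝ) (N : ℕ) : CC s N = ∑ d ∈ Finset.Ioc 0 N, gm s d * ((N / d : ℕ) : ℝ) := by
  rw [CC, cc, ArithmeticFunction.sum_Ioc_mul_zeta_eq_sum]

lemma sum_Ioc_eq_tsum (f : ℕ → ℝ) (x : ℕ) (h : ∀ k, k ∉ Finset.Ioc 0 x → f k = 0) :
    ∑ k ∈ Finset.Ioc 0 x, f k = ∑' k, f k :=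
  (tsum_eq_sum (s := Finset.Ioc 0 x) (fun k hk => h k hk)).symm

lemma summable_rpow_neg {s : ℝ} (hs : 1 < s) : Summable fun k : ℕ => (k : ℝ) ^ (-s) := by
  rw [Real.summable_nat_rpow]; linarith

lemma tendsto_natDiv (k : ℕ) : Tendsto (fun x : ℕ => ((x / k : ℕ) : ℝ) / x) atTop (𝓝 ((k : ℝ)⁻¹)) := by
  rcases Nat.eq_zero_or_pos k with rfl | hk
  · simp
  have h := (tendsto_nat_floor_mul_div_atTop (R := ℝ) (a := (k : ℝ)⁻¹) (by positivity)).comp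
    tendsto_natCast_atTop_atTop
  refine h.congr fun x => ?_
  simp only [Function.comp]
  rw [inv_mul_eq_div, Nat.floor_div_eq_div]

lemma natDiv_div_le (k x : ℕ) : ((x / k : ℕ) : ℝ) / x ≤ (k : ℝ)⁻¹ := by
  rcases Nat.eq_zero_or_pos x with rfl | hx
  · simp
  have : ((x / k : ℕ) : ℝ) ≤ (x : ℝ) / k := Nat.cast_div_le
  rw [div_le_iff₀ (by positivity)]
  rw [inv_mul_eq_div]; exact this

lemma pw_mul_inv {s : ℝ} (hs : 1 < s) (k : ℕ) : pw s k * (k : ℝ)⁻¹ = (k : ℝ) ^ (-s) := by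
  rcases Nat.eq_zero_or_pos k with rfl | hk
  · simp; rw [Real.zero_rpow (by linarith)]
  rw [pw_apply hk.ne', ← Real.rpow_neg_one, ← Real.rpow_add (by positivity)]
  congr 1; ring

/-- The function `cc s` has a mean value. -/
lemma lim_CC {s : ℝ} (hs : 1 < s) : ∃ l : ℝ, Tendsto (fun N : ℕ => CC s N / N) atTop (𝓝 l) := by
  refine ⟨∑' d, gm s d * (d : ℝ)⁻¹, ?_⟩
  have hgm : ∀ d, |gm s d| ≤ pw s d := by
    intro d
    rw [gm, ArithmeticFunction.pmul_apply, abs_mul, abs_of_nonneg (pw_nonneg s d)]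
    refine mul_le_of_le_one_left (pw_nonneg s d) ?_
    have := ArithmeticFunction.abs_moebius_le_one (n := d)
    rw [ArithmeticFunction.intCoe_apply]
    exact_mod_cast this
  have : ∀ N : ℕ, CC s N / N = ∑' d, gm s d * (((N / d : ℕ) : ℝ) / N) := by
    intro N
    rw [CC_eq, Finset.sum_div, ← sum_Ioc_eq_tsum _ N]
    · refine Finset.sum_congr rfl fun d _ => by ring
    · intro k hk
      rcases Nat.eq_zero_or_pos k with rfl | hk0
      · simp
      · have : N < k := by simp at hk; exact hk hk0
        simp [Nat.div_eq_of_lt this]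
  simp_rw [this]
  refine tendsto_tsum_of_dominated_convergence (summable_rpow_neg hs) ?_ ?_
  · intro k; exact (tendsto_natDiv k).const_mul _
  · refine Eventually.of_forall fun N d => ?_
    rw [Real.norm_eq_abs, abs_mul, ← pw_mul_inv hs]
    have h2 : 0 ≤ ((N / d : ℕ) : ℝ) / N := by positivity
    rw [abs_of_nonneg h2]
    exact mul_le_mul (hgm d) (natDiv_div_le d N) h2 (pw_nonneg s d)

/-- The restriction of `pw s` to `F`. -/
def pwF (s : ℝ) (F : Set ℤ) : ArithmeticFunction ℝ := ⟨fun n => ind F n * pw s n, by simp⟩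

lemma pwF_apply (s : ℝ) (F : Set ℤ) (n : ℕ) : pwF s F n = ind F n * pw s n := rfl

/-- The sum `∑ pw s k * cc s m` over `k * m ≤ x`, `k ∈ F`, is asymptotic to `x`
times a constant multiple of the mass of `F` for the weights `k ^ (-s)`. -/
lemma tendsto_pwF {s : ℝ} (hs : 1 < s) (F : Set ℤ) {l : ℝ}
    (hl : Tendsto (fun N : ℕ => CC s N / N) atTop (𝓝 l)) :
    Tendsto (fun x : ℕ => (∑ k ∈ Finset.Ioc 0 x, pwF s F k * CC s (x / k)) / x) atTop
      (𝓝 (∑' k : ℕ, ind F k * (k : ℝ) ^ (-s) * l)) := by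
  have : ∀ N : ℕ, (∑ k ∈ Finset.Ioc 0 N, pwF s F k * CC s (N / k)) / N =
      ∑' k, pwF s F k * (CC s (N / k) / N) := by
    intro N
    rw [Finset.sum_div, ← sum_Ioc_eq_tsum _ N]
    · refine Finset.sum_congr rfl fun d _ => by ring
    · intro k hk
      rcases Nat.eq_zero_or_pos k with rfl | hk0
      · simp
      · have : N < k := by simp at hk; exact hk hk0
        simp [Nat.div_eq_of_lt this, CC]
  simp_rw [this]
  refine tendsto_tsum_of_dominated_convergence (summable_rpow_neg hs) ?_ ?_
  · intro k
    rcases Nat.eq_zero_or_pos k with rfl | hk0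
    · simp; rw [Real.zero_rpow (by linarith)]; simp
    have h1 : Tendsto (fun N : ℕ => (CC s (N / k) / (N / k : ℕ)) * (((N / k : ℕ) : ℝ) / N)) atTop
        (𝓝 (l * (k : ℝ)⁻¹)) :=
      (hl.comp (Nat.tendsto_div_const_atTop hk0.ne')).mul (tendsto_natDiv k)
    have h2 : Tendsto (fun N : ℕ => CC s (N / k) / N) atTop (𝓝 (l * (k : ℝ)⁻¹)) := by
      refine h1.congr fun N => ?_
      rcases Nat.eq_zero_or_pos (N / k) with h | h
      · simp [h, CC]
      · field_simp
    have := h2.const_mul (pwF s F k)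
    rw [pwF_apply, ← pw_mul_inv hs] at *
    convert this using 2; ring
  · refine Eventually.of_forall fun N d => ?_
    have h2 : 0 ≤ CC s (N / d) / N := div_nonneg (CC_nonneg hs _) (by positivity)
    rw [Real.norm_eq_abs, abs_mul, ← pw_mul_inv hs, abs_of_nonneg h2, pwF_apply, abs_mul,
      abs_of_nonneg (pw_nonneg s d), abs_of_nonneg (ind_nonneg F _)]
    refine mul_le_mul (mul_le_of_le_one_left (pw_nonneg s d) (ind_le_one _ _)) ?_ h2 (pw_nonneg s d)
    refine le_trans ?_ (natDiv_div_le d N)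
    gcongr; exact CC_le hs _

/-- A divisor-closed set of upper density at least `u` has mass at least `u` for the probability
measure on the positive integers with weights proportional to `k ^ (-s)`. Indeed
`∑ pw s k * cc s m = 1` over the factorisations `k * m = n`, and for `n ∈ F` all `k` occurring there
lie in `F`; so `cnt F x` is at most the sum of `pw s k * cc s m` over `k * m ≤ x` with `k ∈ F`. -/
lemma mass_ge_density {s : ℝ} (hs : 1 < s) (F : Set ℤ)
    (hF : ∀ k m : ℕ, ((k * m : ℕ) : ℤ) ∈ F → (k : ℤ) ∈ F) {u : ℝ}
    (hu : ∃ᶠ x : ℕ in atTop, u * x ≤ cnt F x) :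
    u * ∑' k : ℕ, (k : ℝ) ^ (-s) ≤ ∑' k : ℕ, ind F k * (k : ℝ) ^ (-s) := by
  obtain ⟨l, hl⟩ := lim_CC hs
  -- normalisation: the full set of integers shows that `l` is the inverse of the total mass
  have hnorm : (∑' k : ℕ, (k : ℝ) ^ (-s)) * l = 1 := by
    have h1 := tendsto_pwF hs Set.univ hl
    have h2 : Tendsto (fun x : ℕ => (∑ k ∈ Finset.Ioc 0 x, pwF s Set.univ k * CC s (x / k)) / x) atTop
        (𝓝 1) := by
      refine tendsto_const_nhds.congr' ?_
      filter_upwards [eventually_gt_atTop 0] with x hx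
      have e : pwF s Set.univ = pw s := by
        ext n; rw [pwF_apply, ind_of_mem (Set.mem_univ _), one_mul]
      rw [e]
      have := ArithmeticFunction.sum_Ioc_mul_eq_sum_sum (pw s) (cc s) x
      simp only [CC]
      rw [← this, pw_mul_cc]
      have hz : ∑ n ∈ Finset.Ioc 0 x, ((ArithmeticFunction.zeta : ArithmeticFunction ℕ) : ArithmeticFunction ℝ) n = x := by
        have := ArithmeticFunction.sum_Ioc_zeta x
        simp_rw [ArithmeticFunction.natCoe_apply]
        exact_mod_cast this
      rw [hz, div_self]; positivity
    have h3 := tendsto_nhds_unique h1 h2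
    simp_rw [ind_of_mem (Set.mem_univ _), one_mul] at h3
    rw [tsum_mul_right] at h3
    exact h3
  have hcount : ∀ x : ℕ, cnt F x ≤ ∑ k ∈ Finset.Ioc 0 x, pwF s F k * CC s (x / k) := by
    intro x
    have := ArithmeticFunction.sum_Ioc_mul_eq_sum_sum (pwF s F) (cc s) x
    simp only [CC]
    rw [← this, cnt_eq_Ioc]
    refine Finset.sum_le_sum fun n hn => ?_
    have hn0 : n ≠ 0 := by simp at hn; omega
    have hnn : ∀ x : ℕ × ℕ, 0 ≤ pwF s F x.1 * cc s x.2 := fun x => by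
      rw [pwF_apply]
      exact mul_nonneg (mul_nonneg (ind_nonneg _ _) (pw_nonneg _ _)) (cc_nonneg hs _)
    rw [ArithmeticFunction.mul_apply]
    by_cases hnF : (n : ℤ) ∈ F
    · rw [ind_of_mem hnF, ← pw_cc_sum s hn0]
      refine le_of_eq (Finset.sum_congr rfl fun x hx => ?_)
      obtain ⟨h, _⟩ := Nat.mem_divisorsAntidiagonal.1 hx
      rw [pwF_apply, ind_of_mem (hF x.1 x.2 (by rw [h]; exact hnF)), one_mul]
    · rw [ind_of_notMem hnF]
      exact Finset.sum_nonneg fun x _ => hnn x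
  have hlim := tendsto_pwF hs F hl
  rw [tsum_mul_right] at hlim
  have hge : u ≤ (∑' k : ℕ, ind F k * (k : ℝ) ^ (-s)) * l := by
    refine ge_of_tendsto_of_frequently hlim ?_
    refine (hu.and_eventually (eventually_gt_atTop 0)).mono ?_
    rintro x ⟨h1, h2⟩
    rw [le_div_iff₀ (by positivity)]
    exact h1.trans (hcount x)
  have hZ : 0 ≤ ∑' k : ℕ, (k : ℝ) ^ (-s) := tsum_nonneg fun k => by positivity
  calc u * ∑' k : ℕ, (k : ℝ) ^ (-s) ≤ _ := mul_le_mul_of_nonneg_right hge hZ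
    _ = (∑' k : ℕ, ind F k * (k : ℝ) ^ (-s)) * ((∑' k : ℕ, (k : ℝ) ^ (-s)) * l) := by ring
    _ = _ := by rw [hnorm, mul_one]

/-- Summation by parts: if the partial sums of `a` are bounded above by `C`, then so are the
partial sums of `a` against a decreasing weight `w` with values in `[0, 1]`. -/
lemma abel_bound (a w : ℕ → ℝ) (C : ℝ) (hC : 0 ≤ C)
    (hS : ∀ n, ∑ k ∈ Finset.range n, a (k + 1) ≤ C) (hw : ∀ n, w (n + 1 + 1) ≤ w (n + 1))
    (hw0 : ∀ n, 0 ≤ w n) (hw1 : w 1 ≤ 1) (n : ℕ) :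
    ∑ k ∈ Finset.range n, a (k + 1) * w (k + 1) ≤ C := by
  have key : ∀ n, ∑ k ∈ Finset.range n, a (k + 1) * w (k + 1) ≤
      C * (w 1 - w (n + 1)) + (∑ k ∈ Finset.range n, a (k + 1)) * w (n + 1) := by
    intro n
    induction n with
    | zero => simp
    | succ n ih =>
      rw [Finset.sum_range_succ, Finset.sum_range_succ]
      have h := hS (n + 1)
      rw [Finset.sum_range_succ] at h
      nlinarith [hw n]
  have h1 := key n
  have h2 := hS n
  nlinarith [hw0 (n + 1), hw0 1]

/-- If `A` has density at most `u` on long initial segments, then its mass for the weights `k ^ (-s)` is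
at most `u ζ(s)`, with an error independent of `s > 1`. -/
lemma abelian {A : Set ℤ} {u : ℝ} (hu : ∀ᶠ x : ℕ in atTop, cnt A x ≤ u * x) :
    ∃ C : ℝ, ∀ s : ℝ, 1 < s →
      ∑' k : ℕ, ind A k * (k : ℝ) ^ (-s) ≤ C + u * ∑' k : ℕ, (k : ℝ) ^ (-s) := by
  obtain ⟨n0, hn0⟩ := eventually_atTop.1 hu
  refine ⟨(1 + |u|) * n0, fun s hs => ?_⟩
  have hsum := summable_rpow_neg hs
  have hsumA : Summable fun k : ℕ => ind A k * (k : ℝ) ^ (-s) :=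
    hsum.of_nonneg_of_le (fun k => mul_nonneg (ind_nonneg _ _) (by positivity))
      (fun k => mul_le_of_le_one_left (by positivity) (ind_le_one _ _))
  rw [← tsum_mul_left, ← sub_le_iff_le_add, ← hsumA.tsum_sub (hsum.mul_left u)]
  have hd := (hsumA.sub (hsum.mul_left u)).hasSum.tendsto_sum_nat
  have hd' := hd.comp (tendsto_add_atTop_nat 1)
  refine le_of_tendsto' hd' fun n => ?_
  simp only [Function.comp]
  rw [Finset.sum_range_succ']
  have hz : ((0 : ℕ) : ℝ) ^ (-s) = 0 := by rw [Nat.cast_zero, Real.zero_rpow (by linarith)]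
  rw [hz, mul_zero, mul_zero, sub_zero, add_zero]
  have := abel_bound (fun k => ind A k - u) (fun k => (k : ℝ) ^ (-s)) ((1 + |u|) * n0)
    (by positivity) ?_ ?_ (fun n => by positivity) (by simp) n
  · refine le_trans (le_of_eq (Finset.sum_congr rfl fun k _ => ?_)) this
    ring
  · intro m
    have e : ∑ k ∈ Finset.range m, ind A ((k + 1 : ℕ) : ℤ) = cnt A m := by
      rw [cnt_eq_range]
    rw [Finset.sum_sub_distrib, e]
    simp only [Finset.sum_const, Finset.card_range, nsmul_eq_mul]
    rcases le_total n0 m with h | h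
    · have := hn0 m h
      have h3 : 0 ≤ (1 + |u|) * n0 := by positivity
      linarith
    · have h1 : cnt A m ≤ m := cnt_le A m
      have h2 : -(m * u) ≤ m * |u| := by
        have := neg_abs_le u
        have hm : (0:ℝ) ≤ m := by positivity
        nlinarith
      have h3 : (m : ℝ) ≤ n0 := by exact_mod_cast h
      nlinarith [abs_nonneg u]
  · intro k
    refine Real.rpow_le_rpow_of_nonpos (by positivity) (by push_cast; linarith) (by linarith)

/-- The elements of `A` not exceeding `K`. -/
def trunc (A : Set ℕ) (K : ℕ) : Set ℕ := {b ∈ A | b ≤ K}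

lemma FB_anti {A A' : Set ℕ} (h : A ⊆ A') : FB A' ⊆ FB A :=
  fun _ hn ⟨b, hb, hd⟩ => hn ⟨b, h hb, hd⟩

lemma trunc_subset (A : Set ℕ) (K : ℕ) : trunc A K ⊆ A := fun _ h => h.1

lemma trunc_mono (A : Set ℕ) {K K' : ℕ} (h : K ≤ K') : trunc A K ⊆ trunc A K' :=
  fun _ hb => ⟨hb.1, hb.2.trans h⟩

lemma FB_divClosed (A : Set ℕ) (k m : ℕ) (h : ((k * m : ℕ) : ℤ) ∈ FB A) : (k : ℤ) ∈ FB A := by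
  rintro ⟨b, hb, hd⟩
  exact h ⟨b, hb, by push_cast; exact Dvd.dvd.mul_right hd _⟩

lemma ratio_nonneg (A : Set ℤ) (L : ℕ) : 0 ≤ cnt A L / L := div_nonneg (cnt_nonneg A L) (by positivity)

lemma ratio_le_one (A : Set ℤ) (L : ℕ) : cnt A L / L ≤ 1 :=
  div_le_one_of_le₀ (cnt_le A L) (by positivity)

lemma bdd_ratio (A : Set ℤ) : IsBoundedUnder (· ≤ ·) atTop fun L : ℕ => cnt A L / L :=
  isBoundedUnder_of ⟨1, fun L => ratio_le_one A L⟩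

lemma cobdd_ratio (A : Set ℤ) : IsCoboundedUnder (· ≤ ·) atTop fun L : ℕ => cnt A L / L :=
  IsBoundedUnder.isCoboundedUnder_le (isBoundedUnder_of ⟨0, fun L => ratio_nonneg A L⟩)

lemma eventually_cnt_le (A : Set ℤ) {u : ℝ} (hu : upperDensity A < u) :
    ∀ᶠ x : ℕ in atTop, cnt A x ≤ u * x := by
  have := eventually_lt_of_limsup_lt hu (bdd_ratio A)
  filter_upwards [this, eventually_gt_atTop 0] with x hx h0
  have h0' : (0:ℝ) < x := by exact_mod_cast h0
  exact ((div_lt_iff₀ h0').1 hx).le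

/-- Davenport–Erdős: the integers free of all `b ∈ A` with `b ≤ K` have, for large `K`, density at most
`ε` above the upper density of the `A`-free integers. Otherwise, by `mass_ge_density` and `K → ∞`, the
mass of the `A`-free integers for the weights `k ^ (-s)` exceeds their upper density by `ε` for all
`s > 1`, which contradicts `abelian` because `ζ(s)` has a pole at `s = 1`. -/
theorem davenport_erdos (A : Set ℕ) {ε : ℝ} (hε : 0 < ε) :
    ∃ K : ℕ, ∀ᶠ x : ℕ in atTop, cnt (FB (trunc A K)) x ≤ (upperDensity (FB A) + ε) * x := by
  by_contra hcon
  push Not at hcon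
  set u := upperDensity (FB A) + ε with hu
  have hev := eventually_cnt_le (FB A) (u := upperDensity (FB A) + ε / 2) (by linarith)
  obtain ⟨C, hC⟩ := abelian hev
  have hkey : ∀ s : ℝ, 1 < s → ∑' k : ℕ, (k : ℝ) ^ (-s) ≤ C * (2 / ε) := by
    intro s hs
    have hsum := summable_rpow_neg hs
    have hbig : ∀ K, u * ∑' k : ℕ, (k : ℝ) ^ (-s) ≤ ∑' k : ℕ, ind (FB (trunc A K)) k * (k : ℝ) ^ (-s) :=
      fun K => mass_ge_density hs _ (FB_divClosed _) ((hcon K).mono fun x hx => hx.le)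
    have hlim : Tendsto (fun K => ∑' k : ℕ, ind (FB (trunc A K)) k * (k : ℝ) ^ (-s)) atTop
        (𝓝 (∑' k : ℕ, ind (FB A) k * (k : ℝ) ^ (-s))) := by
      refine tendsto_tsum_of_dominated_convergence hsum ?_ ?_
      · intro k
        refine tendsto_const_nhds.congr' ?_
        filter_upwards [eventually_ge_atTop k] with K hK
        rcases Nat.eq_zero_or_pos k with rfl | hk
        · have hz : ((0 : ℕ) : ℝ) ^ (-s) = 0 := by rw [Nat.cast_zero, Real.zero_rpow (by linarith)]
          rw [hz, mul_zero, mul_zero]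
        congr 1
        by_cases h : (k : ℤ) ∈ FB A
        · rw [ind_of_mem h, ind_of_mem (FB_anti (trunc_subset A K) h)]
        · rw [ind_of_notMem h, ind_of_notMem]
          intro h'
          refine h fun ⟨b, hb, hd⟩ => h' ⟨b, ⟨hb, ?_⟩, hd⟩
          exact (Nat.le_of_dvd hk (Int.natCast_dvd_natCast.1 hd)).trans hK
      · refine Eventually.of_forall fun K k => ?_
        rw [Real.norm_eq_abs, abs_of_nonneg (mul_nonneg (ind_nonneg _ _) (by positivity))]
        exact mul_le_of_le_one_left (by positivity) (ind_le_one _ _)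
    have h1 := ge_of_tendsto' hlim hbig
    have h2 := hC s hs
    rw [mul_div_assoc', le_div_iff₀ hε]
    nlinarith
  have hpole := tendsto_sub_mul_tsum_nat_rpow
  have hz : Tendsto (fun s : ℝ => (s - 1) * (C * (2 / ε))) (𝓝[>] 1) (𝓝 0) := by
    have : Tendsto (fun s : ℝ => (s - 1) * (C * (2 / ε))) (𝓝 1) (𝓝 ((1 - 1) * (C * (2 / ε)))) := by
      apply Continuous.tendsto; fun_prop
    simpa using this.mono_left nhdsWithin_le_nhds
  have := le_of_tendsto_of_tendsto hpole hz ?_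
  · linarith
  · filter_upwards [self_mem_nhdsWithin] with s hs
    have hs' : (1 : ℝ) < s := hs
    refine mul_le_mul_of_nonneg_left ?_ (by linarith)
    refine le_trans (le_of_eq ?_) (hkey s hs')
    refine tsum_congr fun k => ?_
    rw [Real.rpow_neg (by positivity), one_div]

/-! ### Invariant means on the integers -/

/-- A finitely additive translation-invariant probability `D` on `ℤ` which is dominated by the upper
density. -/
structure IsMean (D : Set ℤ → ℝ) : Prop where
  nonneg : ∀ E, 0 ≤ D E
  univ : D Set.univ = 1
  union : ∀ E E', Disjoint E E' → D (E ∪ E') = D E + D E'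
  shift_one : ∀ E, D {m | m + 1 ∈ E} = D E
  le_of_eventually : ∀ E u, (∀ᶠ x : ℕ in atTop, cnt E x ≤ u * x) → D E ≤ u

lemma ind_union {E E' : Set ℤ} (h : Disjoint E E') (n : ℤ) : ind (E ∪ E') n = ind E n + ind E' n := by
  have h' : n ∈ E → n ∉ E' := fun hn => Set.disjoint_left.1 h hn
  by_cases h1 : n ∈ E <;> by_cases h2 : n ∈ E' <;> simp_all [ind]

/-- A limit of the averages `cnt E L / L` along a suitable ultrafilter is a mean, and the ultrafilter
may be chosen so that it realises the upper density of a given set. -/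
lemma exists_mean (A : Set ℤ) : ∃ D : Set ℤ → ℝ, IsMean D ∧ D A = upperDensity A := by
  have hcl : MapClusterPt (upperDensity A) atTop (fun L : ℕ => cnt A L / L) := by
    rw [mapClusterPt_iff_frequently]
    intro s hs
    obtain ⟨l, u, ⟨hl, hu⟩, hsub⟩ := mem_nhds_iff_exists_Ioo_subset.1 hs
    have h1 : ∃ᶠ L : ℕ in atTop, l < cnt A L / L := frequently_lt_of_lt_limsup (cobdd_ratio A) hl
    have h2 : ∀ᶠ L : ℕ in atTop, cnt A L / L < u := eventually_lt_of_limsup_lt hu (bdd_ratio A)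
    exact (h1.and_eventually h2).mono fun x hx => hsub ⟨hx.1, hx.2⟩
  obtain ⟨U, hU, hlim⟩ := mapClusterPt_iff_ultrafilter.1 hcl
  have hex : ∀ E : Set ℤ, ∃ d : ℝ, Tendsto (fun L : ℕ => cnt E L / L) U (𝓝 d) := by
    intro E
    have hc : IsCompact (Set.Icc (0 : ℝ) 1) := isCompact_Icc
    obtain ⟨d, _, hd⟩ := hc.ultrafilter_le_nhds (U.map fun L : ℕ => cnt E L / L) (by
      rw [Ultrafilter.coe_map, le_principal_iff, mem_map]
      exact Filter.univ_mem' fun L => ⟨ratio_nonneg E L, ratio_le_one E L⟩)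
    exact ⟨d, hd⟩
  choose D hD using hex
  have hpos : ∀ᶠ L : ℕ in (U : Filter ℕ), 0 < L := hU (eventually_gt_atTop 0)
  refine ⟨D, ⟨?_, ?_, ?_, ?_, ?_⟩, tendsto_nhds_unique (hD A) hlim⟩
  · intro E; exact ge_of_tendsto' (hD E) fun L => ratio_nonneg E L
  · refine tendsto_nhds_unique (hD _) (tendsto_const_nhds.congr' ?_)
    filter_upwards [hpos] with L hL
    have : cnt Set.univ L = L := by simp [cnt]
    rw [this, div_self]; positivity
  · intro E E' h
    refine tendsto_nhds_unique (hD _) (((hD E).add (hD E')).congr fun L => ?_)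
    rw [cnt_eq_Ioc, cnt_eq_Ioc, cnt_eq_Ioc, ← add_div, ← Finset.sum_add_distrib]
    simp_rw [ind_union h]
  · intro E
    refine tendsto_nhds_unique (hD _) ?_
    have h0 : Tendsto (fun L : ℕ => (ind E (L + 1) - ind E 1) / (L : ℝ)) U (𝓝 0) := by
      have h2 : Tendsto (fun L : ℕ => (ind E (L + 1) - ind E 1) / (L : ℝ)) atTop (𝓝 0) := by
        refine squeeze_zero_norm (a := fun L : ℕ => 1 / (L : ℝ)) ?_ tendsto_one_div_atTop_nhds_zero_nat
        intro L
        rw [norm_div, Real.norm_natCast]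
        gcongr
        rw [Real.norm_eq_abs, abs_le]
        constructor <;> linarith [ind_nonneg E (L + 1), ind_nonneg E 1, ind_le_one E (L + 1), ind_le_one E 1]
      exact h2.mono_left hU
    have h1 := (hD E).add h0
    rw [add_zero] at h1
    refine h1.congr fun L => ?_
    rw [← add_div, cnt_eq_range, cnt_eq_range]
    congr 1
    have e : ∀ k : ℤ, ind {m | m + 1 ∈ E} k = ind E (k + 1) := fun k => rfl
    rw [Finset.sum_congr rfl fun (k : ℕ) _ => e ((k + 1 : ℕ) : ℤ)]
    have := Finset.sum_range_succ' (fun k : ℕ => ind E ((k + 1 : ℕ) : ℤ)) L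
    rw [Finset.sum_range_succ] at this
    push_cast at this ⊢
    linarith
  · intro E u h
    refine le_of_tendsto (hD E) ?_
    filter_upwards [hpos, hU h] with L h1 h2
    rw [div_le_iff₀ (by positivity)]; exact h2

namespace IsMean
variable {D : Set ℤ → ℝ}

lemma empty (h : IsMean D) : D ∅ = 0 := by
  have := h.union ∅ ∅ (by simp)
  simp at this; exact this

lemma diff (h : IsMean D) {E E' : Set ℤ} (hs : E ⊆ E') : D (E' \ E) = D E' - D E := by
  have := h.union E (E' \ E) Set.disjoint_sdiff_right
  rw [Set.union_sdiff_cancel hs] at this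
  linarith

lemma mono (h : IsMean D) {E E' : Set ℤ} (hs : E ⊆ E') : D E ≤ D E' := by
  have := h.diff hs
  have := h.nonneg (E' \ E)
  linarith

lemma union_le (h : IsMean D) (E E' : Set ℤ) : D (E ∪ E') ≤ D E + D E' := by
  have := h.union E (E' \ E) Set.disjoint_sdiff_right
  rw [Set.union_sdiff_self] at this
  rw [this]
  linarith [h.mono (Set.sdiff_subset : E' \ E ⊆ E')]

lemma biUnion_le (h : IsMean D) {ι : Type*} (s : Finset ι) (E : ι → Set ℤ) :
    D (⋃ i ∈ s, E i) ≤ ∑ i ∈ s, D (E i) := by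
  induction s using Finset.induction_on with
  | empty => simp [h.empty]
  | insert a s ha ih =>
    rw [Finset.set_biUnion_insert, Finset.sum_insert ha]
    exact (h.union_le _ _).trans (by linarith)

lemma sum_fiber (h : IsMean D) {ι : Type*} (s : Finset ι) (f : ℤ → ι) (E : Set ℤ)
    (hE : ∀ m ∈ E, f m ∈ s) : D E = ∑ i ∈ s, D {m | m ∈ E ∧ f m = i} := by
  induction s using Finset.induction_on generalizing E with
  | empty =>
    have : E = ∅ := Set.eq_empty_of_forall_notMem fun m hm => by simpa using hE m hm
    simp [this, h.empty]
  | insert a s ha ih =>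
    rw [Finset.sum_insert ha]
    have h1 := ih {m | m ∈ E ∧ f m ≠ a} (fun m hm => by
      have := hE m hm.1
      rcases Finset.mem_insert.1 this with h | h
      · exact absurd h hm.2
      · exact h)
    have h2 : ∑ i ∈ s, D {m | m ∈ {m | m ∈ E ∧ f m ≠ a} ∧ f m = i} = ∑ i ∈ s, D {m | m ∈ E ∧ f m = i} := by
      refine Finset.sum_congr rfl fun i hi => ?_
      congr 1
      ext m
      constructor
      · rintro ⟨⟨h1, _⟩, h3⟩; exact ⟨h1, h3⟩
      · rintro ⟨h1, h3⟩
        exact ⟨⟨h1, by rw [h3]; rintro rfl; exact ha hi⟩, h3⟩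
    rw [← h2, ← h1, ← h.union]
    · congr 1
      ext m
      simp only [Set.mem_union, Set.mem_ofPred_eq]
      tauto
    · rw [Set.disjoint_left]
      rintro m ⟨_, h1⟩ ⟨_, h2⟩
      exact h2 h1

lemma shift_nat (h : IsMean D) (E : Set ℤ) (c : ℕ) : D {m | m + c ∈ E} = D E := by
  induction c with
  | zero => simp
  | succ c ih =>
    rw [← ih, ← h.shift_one {m | m + (c : ℤ) ∈ E}]
    congr 1; ext m; simp only [Set.mem_ofPred_eq]; push_cast
    rw [add_assoc, add_comm 1]

lemma exists_pos_fiber (h : IsMean D) {ι : Type*} (s : Finset ι) (f : ℤ → ι) (E : Set ℤ)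
    (hE : ∀ m ∈ E, f m ∈ s) (hpos : 0 < D E) : ∃ i ∈ s, 0 < D {m | m ∈ E ∧ f m = i} := by
  rw [h.sum_fiber s f E hE] at hpos
  exact Finset.exists_lt_of_sum_lt (by simpa using hpos)

/-- Some pattern of membership in `G` on a window of length `N` has positive mean and contains at
least the average number of points. -/
lemma exists_rich_pattern (h : IsMean D) (G : Set ℤ) (N : ℕ) :
    ∃ U : Finset ℕ, U ⊆ Finset.range N ∧ N * D G ≤ U.card ∧
      0 < D {m | ∀ j < N, (m + (j : ℤ) ∈ G ↔ j ∈ U)} := by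
  let f : ℤ → Finset ℕ := fun m => (Finset.range N).filter fun j : ℕ => m + (j : ℤ) ∈ G
  let p : Finset ℕ → ℝ := fun U => D {m | m ∈ Set.univ ∧ f m = U}
  have hf : ∀ m, f m ∈ (Finset.range N).powerset := fun m => Finset.mem_powerset.2 (Finset.filter_subset _ _)
  have h1 : ∑ U ∈ (Finset.range N).powerset, p U = 1 := by
    rw [← h.univ]; exact (h.sum_fiber _ f Set.univ fun m _ => hf m).symm
  have h2 : (N : ℝ) * D G = ∑ U ∈ (Finset.range N).powerset, (U.card : ℝ) * p U := by
    calc (N : ℝ) * D G = ∑ j ∈ Finset.range N, D {m | m + (j : ℤ) ∈ G} := by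
          simp_rw [h.shift_nat]; simp
      _ = ∑ j ∈ Finset.range N, ∑ U ∈ (Finset.range N).powerset, if j ∈ U then p U else 0 := by
          refine Finset.sum_congr rfl fun j hj => ?_
          rw [h.sum_fiber (Finset.range N).powerset f _ fun m _ => hf m]
          refine Finset.sum_congr rfl fun U _ => ?_
          have hiff : ∀ m, m + (j : ℤ) ∈ G ↔ j ∈ f m := fun m => by
            simp only [f, Finset.mem_filter, hj, true_and]
          split_ifs with hjU
          · congr 1; ext m
            simp only [Set.mem_ofPred_eq, Set.mem_univ, true_and, hiff]
            constructor
            · exact fun h => h.2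
            · intro h; exact ⟨by rw [h]; exact hjU, h⟩
          · rw [← h.empty]; congr 1; ext m
            simp only [Set.mem_ofPred_eq, hiff, Set.mem_empty_iff_false, iff_false]
            rintro ⟨h3, h4⟩; rw [h4] at h3; exact hjU h3
      _ = _ := by
          rw [Finset.sum_comm]
          refine Finset.sum_congr rfl fun U hU => ?_
          rw [← Finset.sum_filter, Finset.sum_const, nsmul_eq_mul, Finset.filter_mem_eq_inter,
            Finset.inter_eq_right.2 (Finset.mem_powerset.1 hU)]
  by_contra hcon
  push Not at hcon
  have h3 : ∀ U ∈ (Finset.range N).powerset, N * D G ≤ U.card → p U ≤ 0 := by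
    intro U hU hc
    refine le_trans (h.mono ?_) (hcon U (Finset.mem_powerset.1 hU) hc)
    rintro m ⟨_, hm⟩ j hj
    simp only [← hm, f, Finset.mem_filter, Finset.mem_range, hj, true_and]
  obtain ⟨V, hV, hVpos⟩ : ∃ V ∈ (Finset.range N).powerset, 0 < p V :=
    Finset.exists_lt_of_sum_lt (by simp [h1])
  have h4 : ∑ U ∈ (Finset.range N).powerset, (U.card : ℝ) * p U <
      ∑ U ∈ (Finset.range N).powerset, (N * D G) * p U := by
    have hlt : ∀ U ∈ (Finset.range N).powerset, 0 < p U → (U.card : ℝ) < N * D G := by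
      intro U hU hp
      by_contra hc
      exact absurd (h3 U hU (not_lt.1 hc)) (not_le.2 hp)
    refine Finset.sum_lt_sum ?_ ⟨V, hV, mul_lt_mul_of_pos_right (hlt V hV hVpos) hVpos⟩
    intro U hU
    rcases (h.nonneg {m | m ∈ Set.univ ∧ f m = U}).eq_or_lt with h0 | h0
    · have : p U = 0 := h0.symm
      simp [this]
    · exact mul_le_mul_of_nonneg_right (hlt U hU h0).le h0.le
  rw [← Finset.mul_sum, h1, mul_one, ← h2] at h4
  exact lt_irrefl _ h4

/-- A `P`-periodic set is independent of residue classes to a modulus coprime to `P`. -/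
lemma periodic_indep (h : IsMean D) (E : Set ℤ) (P a : ℕ) (hP : ∀ m, m + (P : ℤ) ∈ E ↔ m ∈ E)
    (ha : 0 < a) (hcop : Nat.Coprime P a) (t : ℤ) :
    D {m | m ∈ E ∧ (a : ℤ) ∣ m - t} = D E / a := by
  have hP' : ∀ (u : ℕ) m, m + ((u * P : ℕ) : ℤ) ∈ E ↔ m ∈ E := by
    intro u
    induction u with
    | zero => simp
    | succ u ih =>
      intro m
      rw [← ih m, ← hP (m + ((u * P : ℕ) : ℤ))]
      push_cast; ring_nf
  have : NeZero a := ⟨ha.ne'⟩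
  let F : ZMod a → Set ℤ := fun z => {m | m ∈ E ∧ (m : ZMod a) = z}
  have hstep : ∀ z, D (F z) = D (F 0) := by
    intro z
    let u : ℕ := (z * (P : ZMod a)⁻¹).val
    have hu : ((u * P : ℕ) : ZMod a) = z := by
      push_cast
      simp only [u]
      rw [ZMod.natCast_val, ZMod.cast_id', id_eq, mul_assoc, mul_comm _ (P : ZMod a), ZMod.coe_mul_inv_eq_one P hcop, mul_one]
    rw [← h.shift_nat (F z) (u * P)]
    congr 1
    ext m
    simp only [F, Set.mem_ofPred_eq, hP']
    rw [Int.cast_add, Int.cast_natCast, hu]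
    simp
  have hsum := h.sum_fiber (Finset.univ : Finset (ZMod a)) (fun m : ℤ => (m : ZMod a)) E (fun _ _ => Finset.mem_univ _)
  have h2 : ∑ i : ZMod a, D {m | m ∈ E ∧ (m : ZMod a) = i} = a * D (F 0) := by
    rw [Finset.sum_congr rfl fun z _ => hstep z]
    simp [ZMod.card]
  rw [h2] at hsum
  have h3 : {m | m ∈ E ∧ (a : ℤ) ∣ m - t} = F (t : ZMod a) := by
    ext m
    simp only [F, Set.mem_ofPred_eq]
    rw [← ZMod.intCast_zmod_eq_zero_iff_dvd, Int.cast_sub, sub_eq_zero]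
  rw [h3, hstep, hsum]
  field_simp

end IsMean

/-! ### The lower bound for the entropy -/

lemma zero_notMem_Dset {B : Set ℕ} (hB : 0 ∉ B) : 0 ∉ Dset B := by
  rintro ⟨A, hA, -, -, h⟩
  obtain ⟨a, ha⟩ := hA.nonempty
  exact hB (by simpa using h a ha)

/-- By well-foundedness of divisibility, every element of `S` has a divisor in `primPart S`. -/
lemma FB_primPart {S : Set ℕ} (hS : 0 ∉ S) : FB (primPart S) = FB S := by
  apply Set.Subset.antisymm
  · rintro n hn ⟨c, hc, hcn⟩
    have hex : ∃ b, b ∈ S ∧ b ∣ c := ⟨c, hc, dvd_rfl⟩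
    obtain ⟨h1, h2⟩ := Nat.find_spec hex
    refine hn ⟨Nat.find hex, ⟨h1, fun b' hb' hd => ?_⟩, (Int.natCast_dvd_natCast.2 h2).trans hcn⟩
    refine le_antisymm (Nat.le_of_dvd (Nat.pos_of_ne_zero fun h0 => hS (h0 ▸ h1)) hd) ?_
    exact Nat.find_min' hex ⟨hb', hd.trans h2⟩
  · exact FB_anti fun b hb => hb.1

lemma FB_Bstar {B : Set ℕ} (hB : 0 ∉ B) : FB (Bstar B) = FB (B ∪ Dset B) :=
  FB_primPart (by rintro (h | h); exacts [hB h, zero_notMem_Dset hB h])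

/-- Only finitely many members of a pairwise coprime set can share a prime factor with `Q`. -/
lemma exists_coprime {A : Set ℕ} (hA : A.Infinite) (hp : A.Pairwise Nat.Coprime) {Q : ℕ} (hQ : Q ≠ 0) :
    ∃ a ∈ A, Nat.Coprime Q a := by
  by_contra hcon
  push Not at hcon
  refine hA (Set.Finite.of_injOn (f := fun a => (Nat.gcd Q a).minFac) (t := (Q.primeFactors : Set ℕ)) ?_ ?_ (Finset.finite_toSet _))
  · intro a ha
    have hg : Nat.gcd Q a ≠ 1 := hcon a ha
    simp only [Finset.mem_coe, Nat.mem_primeFactors]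
    exact ⟨Nat.minFac_prime hg, (Nat.minFac_dvd _).trans (Nat.gcd_dvd_left _ _), hQ⟩
  · intro a ha b hb hab
    simp only at hab
    by_contra hne
    have hg : Nat.gcd Q a ≠ 1 := hcon a ha
    have h1 : (Nat.gcd Q a).minFac ∣ a := (Nat.minFac_dvd _).trans (Nat.gcd_dvd_right _ _)
    have h2 : (Nat.gcd Q a).minFac ∣ b := hab ▸ (Nat.minFac_dvd _).trans (Nat.gcd_dvd_right _ _)
    exact (Nat.minFac_prime hg).one_lt.ne' (Nat.dvd_one.1 ((hp ha hb hne) ▸ Nat.dvd_gcd h1 h2))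

/-- The translates `m` in the residue class of `m0` modulo `Q` for which `m + j` is `B`-free for
all `j ∈ T`. -/
def freeSet (B : Set ℕ) (Q : ℕ) (m0 : ℤ) (T : Finset ℕ) : Set ℤ :=
  {m | (Q : ℤ) ∣ m - m0 ∧ ∀ j ∈ T, m + (j : ℤ) ∈ FB B}

/-- If `d ∈ Dset B` divides `m0 + i`, then `i` may be turned into a multiple of an element of `B`
without losing positivity of the mean: pass to the subclass `a ∣ m + i`, where `d * a ∈ B` and `a` is
coprime to `Q`. Elements of `B` not coprime to `a` cannot divide `m + j` in that subclass, as `i - j`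
divides `Q`; freeness from the elements `b ≤ K` of `B` coprime to `a` is a periodic condition independent
of the residue modulo `a`; and, by the theorem of Davenport and Erdős, the elements `b > K` only remove
a set of small mean. -/
lemma kill_step {D : Set ℤ → ℝ} (hM : IsMean D) {B : Set ℕ}
    (hDB : D (FB B) = upperDensity (FB B)) {N Q : ℕ} (hQ : Q ≠ 0)
    (hNQ : ∀ k, 0 < k → k < N → k ∣ Q) {T : Finset ℕ} (hT : T ⊆ Finset.range N) {i : ℕ}
    (hiN : i < N) (hiT : i ∉ T) {m0 : ℤ} {d : ℕ} (hd : d ∈ Dset B) (hdQ : d ∣ Q)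
    (hdm : (d : ℤ) ∣ m0 + i) (hpos : 0 < D (freeSet B Q m0 T)) :
    ∃ (Q' : ℕ) (m1 : ℤ), Q' ≠ 0 ∧ Q ∣ Q' ∧ (Q : ℤ) ∣ m1 - m0 ∧ 0 < D (freeSet B Q' m1 T) ∧
      ∃ b ∈ B, b ∣ Q' ∧ (b : ℤ) ∣ m1 + i := by
  obtain ⟨A, hAinf, hApos, hAcop, hAB⟩ := hd
  obtain ⟨a, haA, haQ⟩ := exists_coprime hAinf hAcop hQ
  have ha : 0 < a := hApos a haA
  have haR : (0 : ℝ) < a := by exact_mod_cast ha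
  set c := D (freeSet B Q m0 T) with hc
  set ε := c / (a * (T.card + 1)) with hε
  have hεpos : 0 < ε := by positivity
  obtain ⟨K, hK⟩ := davenport_erdos B hεpos
  have hDK := hM.le_of_eventually _ _ hK
  let Ecop : Set ℤ := {m | (Q : ℤ) ∣ m - m0 ∧ ∀ j ∈ T, ∀ b ∈ B, b ≤ K → Nat.Coprime b a →
    ¬ (b : ℤ) ∣ m + (j : ℤ)}
  let s : Finset ℕ := (Finset.range (K + 1)).filter fun b => Nat.Coprime b a
  let P : ℕ := Q * ∏ b ∈ s, b
  have hPcop : Nat.Coprime P a :=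
    Nat.Coprime.mul_left haQ (Nat.Coprime.prod_left fun b hb => (Finset.mem_filter.1 hb).2)
  have hPQ : (Q : ℤ) ∣ (P : ℤ) := Int.natCast_dvd_natCast.2 (dvd_mul_right _ _)
  have hPb : ∀ b, b ≤ K → Nat.Coprime b a → (b : ℤ) ∣ (P : ℤ) := by
    intro b hb hba
    refine Int.natCast_dvd_natCast.2 (Dvd.dvd.mul_left (Finset.dvd_prod_of_mem (fun b => b) ?_) _)
    simp only [s, Finset.mem_filter, Finset.mem_range]; exact ⟨by omega, hba⟩
  have hPer : ∀ m, m + (P : ℤ) ∈ Ecop ↔ m ∈ Ecop := by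
    intro m
    have h1 : (Q : ℤ) ∣ m + P - m0 ↔ (Q : ℤ) ∣ m - m0 := by
      rw [show m + (P : ℤ) - m0 = (m - m0) + P by ring]; exact dvd_add_left hPQ
    have h2 : ∀ j : ℕ, ∀ b : ℕ, b ≤ K → Nat.Coprime b a →
        ((b : ℤ) ∣ m + P + j ↔ (b : ℤ) ∣ m + j) := by
      intro j b hb hba
      rw [show m + (P : ℤ) + j = (m + j) + P by ring]; exact dvd_add_left (hPb b hb hba)
    constructor
    · rintro ⟨h, h'⟩
      exact ⟨h1.1 h, fun j hj b hb hbK hba hdv => h' j hj b hb hbK hba ((h2 j b hbK hba).2 hdv)⟩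
    · rintro ⟨h, h'⟩
      exact ⟨h1.2 h, fun j hj b hb hbK hba hdv => h' j hj b hb hbK hba ((h2 j b hbK hba).1 hdv)⟩
  have hind := hM.periodic_indep Ecop P a hPer ha hPcop (-(i : ℤ))
  have hsub : freeSet B Q m0 T ⊆ Ecop := fun m hm =>
    ⟨hm.1, fun j hj b hb _ _ hdv => hm.2 j hj ⟨b, hb, hdv⟩⟩
  have hge : c ≤ D Ecop := hM.mono hsub
  let E1 : Set ℤ := {m | ((Q : ℤ) ∣ m - m0 ∧ (a : ℤ) ∣ m + i) ∧ ∀ j ∈ T, m + (j : ℤ) ∈ FB B}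
  have hcover : {m | m ∈ Ecop ∧ (a : ℤ) ∣ m - -(i : ℤ)} ⊆
      E1 ∪ ⋃ j ∈ T, {m | m + (j : ℤ) ∈ FB (trunc B K) \ FB B} := by
    rintro m ⟨⟨hm1, hm2⟩, hm3⟩
    rw [sub_neg_eq_add] at hm3
    have hfree : ∀ j ∈ T, m + (j : ℤ) ∈ FB (trunc B K) := by
      rintro j hj ⟨b, ⟨hb, hbK⟩, hdv⟩
      by_cases hba : Nat.Coprime b a
      · exact hm2 j hj b hb hbK hba hdv
      -- a common prime factor of `a` and `b` divides `i - j`, hence divides `Q`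
      obtain ⟨p, hp, hpb, hpa⟩ := Nat.Prime.not_coprime_iff_dvd.1 hba
      have h1 : (p : ℤ) ∣ m + j := (Int.natCast_dvd_natCast.2 hpb).trans hdv
      have h2 : (p : ℤ) ∣ m + i := (Int.natCast_dvd_natCast.2 hpa).trans hm3
      have h3 : (p : ℤ) ∣ (i : ℤ) - j := by
        have := dvd_sub h2 h1
        rwa [show m + (i : ℤ) - (m + j) = i - j by ring] at this
      have hjN : j < N := Finset.mem_range.1 (hT hj)
      have hne : i ≠ j := by rintro rfl; exact hiT hj
      have h4 : p ∣ ((i : ℤ) - j).natAbs := Int.natCast_dvd.1 h3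
      have h5 : ((i : ℤ) - j).natAbs ∣ Q := hNQ _ (by omega) (by omega)
      have h6 : p ∣ Nat.gcd Q a := Nat.dvd_gcd (h4.trans h5) hpa
      rw [haQ] at h6
      exact hp.one_lt.ne' (Nat.dvd_one.1 h6)
    by_cases hall : ∀ j ∈ T, m + (j : ℤ) ∈ FB B
    · exact Or.inl ⟨⟨hm1, hm3⟩, hall⟩
    · push Not at hall
      obtain ⟨j, hj, hjn⟩ := hall
      right
      simp only [Set.mem_iUnion]
      exact ⟨j, hj, hfree j hj, hjn⟩
  have hE1 : 0 < D E1 := by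
    have h1 := (hM.mono hcover).trans (hM.union_le _ _)
    have h2 := hM.biUnion_le T (fun j => {m | m + (j : ℤ) ∈ FB (trunc B K) \ FB B})
    have h3 : ∀ j : ℕ, D {m | m + (j : ℤ) ∈ FB (trunc B K) \ FB B} ≤ ε := by
      intro j
      rw [hM.shift_nat, hM.diff (FB_anti (trunc_subset B K)), hDB]
      linarith
    have h4 : ∑ j ∈ T, D {m | m + (j : ℤ) ∈ FB (trunc B K) \ FB B} ≤ T.card * ε := by
      refine (Finset.sum_le_sum fun j _ => h3 j).trans ?_
      simp
    rw [hind] at h1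
    have h5 : c / a ≤ D Ecop / a := by gcongr
    have h6 : (T.card + 1) * ε = c / a := by rw [hε]; field_simp
    linarith
  obtain ⟨m1, hm1⟩ : E1.Nonempty := by
    rw [Set.nonempty_iff_ne_empty]
    intro h0; rw [h0, hM.empty] at hE1; exact lt_irrefl _ hE1
  have hQa : IsCoprime (Q : ℤ) (a : ℤ) := Nat.isCoprime_iff_coprime.2 haQ
  have hdQ' : (d : ℤ) ∣ (Q : ℤ) := Int.natCast_dvd_natCast.2 hdQ
  refine ⟨Q * a, m1, mul_ne_zero hQ ha.ne', dvd_mul_right _ _, hm1.1.1, ?_, d * a, hAB a haA,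
    Nat.mul_dvd_mul_right hdQ a, ?_⟩
  · refine hE1.trans_le (hM.mono ?_)
    rintro m ⟨⟨h1, h2⟩, h3⟩
    refine ⟨?_, h3⟩
    push_cast
    refine hQa.mul_dvd ?_ ?_
    · have := dvd_sub h1 hm1.1.1
      rwa [show m - m0 - (m1 - m0) = m - m1 by ring] at this
    · have := dvd_sub h2 hm1.1.2
      rwa [show m + (i : ℤ) - (m1 + i) = m - m1 by ring] at this
  · push_cast
    refine (hQa.of_isCoprime_of_dvd_left hdQ').mul_dvd ?_ hm1.1.2
    have := dvd_add (hdQ'.trans hm1.1.1) hdm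
    rwa [show m1 - m0 + (m0 + (i : ℤ)) = m1 + i by ring] at this

/-- Iteration of `kill_step` over a finite set `S` of positions disjoint from `T`. -/
lemma kill_all {D : Set ℤ → ℝ} (hM : IsMean D) {B : Set ℕ}
    (hDB : D (FB B) = upperDensity (FB B)) {N Q : ℕ} (hQ : Q ≠ 0)
    (hNQ : ∀ k, 0 < k → k < N → k ∣ Q) {T : Finset ℕ} (hT : T ⊆ Finset.range N) {m0 : ℤ}
    (hpos : 0 < D (freeSet B Q m0 T)) (S : Finset ℕ) (hS : S ⊆ Finset.range N)
    (hST : ∀ i ∈ S, i ∉ T) (hd : ∀ i ∈ S, ∃ d ∈ Dset B, d ∣ Q ∧ (d : ℤ) ∣ m0 + i) :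
    ∃ (Q' : ℕ) (m1 : ℤ), Q' ≠ 0 ∧ Q ∣ Q' ∧ (Q : ℤ) ∣ m1 - m0 ∧ 0 < D (freeSet B Q' m1 T) ∧
      ∀ i ∈ S, ∃ b ∈ B, b ∣ Q' ∧ (b : ℤ) ∣ m1 + i := by
  induction S using Finset.induction_on with
  | empty => exact ⟨Q, m0, hQ, dvd_rfl, by simp, hpos, by simp⟩
  | insert i S hi ih =>
    obtain ⟨Q1, m1, hQ1, hQQ1, hm1, hpos1, hb1⟩ := ih
      (fun j hj => hS (Finset.mem_insert_of_mem hj)) (fun j hj => hST j (Finset.mem_insert_of_mem hj))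
      (fun j hj => hd j (Finset.mem_insert_of_mem hj))
    obtain ⟨d, hdD, hdQ, hdm⟩ := hd i (Finset.mem_insert_self _ _)
    have hdm1 : (d : ℤ) ∣ m1 + i := by
      have := dvd_add ((Int.natCast_dvd_natCast.2 hdQ).trans hm1) hdm
      rwa [show m1 - m0 + (m0 + (i : ℤ)) = m1 + i by ring] at this
    obtain ⟨Q2, m2, hQ2, hQQ2, hm2, hpos2, b, hbB, hbQ, hbm⟩ := kill_step hM hDB hQ1
      (fun k h1 h2 => (hNQ k h1 h2).trans hQQ1) hT (Finset.mem_range.1 (hS (Finset.mem_insert_self _ _)))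
      (hST i (Finset.mem_insert_self _ _)) hdD (hdQ.trans hQQ1) hdm1 hpos1
    refine ⟨Q2, m2, hQ2, hQQ1.trans hQQ2, ?_, hpos2, ?_⟩
    · have := dvd_add ((Int.natCast_dvd_natCast.2 hQQ1).trans hm2) hm1
      rwa [show m2 - m1 + (m1 - m0) = m2 - m0 by ring] at this
    · intro j hj
      rcases Finset.mem_insert.1 hj with rfl | hj
      · exact ⟨b, hbB, hbQ, hbm⟩
      · obtain ⟨b', hb', hbQ', hbm'⟩ := hb1 j hj
        refine ⟨b', hb', hbQ'.trans hQQ2, ?_⟩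
        have := dvd_add ((Int.natCast_dvd_natCast.2 hbQ').trans hm2) hbm'
        rwa [show m2 - m1 + (m1 + (j : ℤ)) = m2 + j by ring] at this

lemma eta_eq_true {B : Set ℕ} {n : ℤ} : eta B n = true ↔ n ∈ FB B := by simp [eta]

lemma eta_mem_Xeta (B : Set ℕ) : eta B ∈ Xeta B :=
  subset_closure ⟨0, by funext n; simp⟩

/-- If `η` realises every pattern on a set `U` of positions, there are at least `2 ^ |U|` blocks. -/
lemma pCount_ge {B : Set ℕ} {N : ℕ} {U : Finset ℕ} (hU : U ⊆ Finset.range N)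
    (h : ∀ S ⊆ U, ∃ m : ℤ, ∀ i ∈ U, (m + (i : ℤ) ∈ FB B ↔ i ∉ S)) :
    2 ^ U.card ≤ pCount (Xeta B) N := by
  choose! m hm using h
  let w : Finset ℕ → (Fin N → Bool) := fun S i => eta B (m S + (i : ℤ))
  have hinj : Set.InjOn w (U.powerset : Set (Finset ℕ)) := by
    intro S hS S' hS' heq
    rw [Finset.mem_coe, Finset.mem_powerset] at hS hS'
    have key : ∀ i ∈ U, (i ∉ S ↔ i ∉ S') := by
      intro i hi
      rw [← hm S hS i hi, ← hm S' hS' i hi, ← eta_eq_true, ← eta_eq_true]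
      have := congrFun heq ⟨i, Finset.mem_range.1 (hU hi)⟩
      simp only [w] at this
      rw [this]
    ext i
    constructor
    · intro hi; by_contra h'; exact ((key i (hS hi)).2 h') hi
    · intro hi; by_contra h'; exact ((key i (hS' hi)).1 h') hi
  rw [← Finset.card_powerset, ← Finset.card_image_of_injOn hinj, ← Set.ncard_coe_finset]
  refine Set.ncard_le_ncard ?_ (Set.toFinite _)
  intro v hv
  rw [Finset.mem_coe, Finset.mem_image] at hv
  obtain ⟨S, _, rfl⟩ := hv
  exact ⟨eta B, eta_mem_Xeta B, m S, fun i => rfl⟩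

lemma pCount_le (X : Set (ℤ → Bool)) (n : ℕ) : pCount X n ≤ 2 ^ n := by
  refine (Set.ncard_le_ncard (Set.subset_univ _) (Set.toFinite _)).trans ?_
  rw [Set.ncard_univ]; simp

lemma pCount_pos (B : Set ℕ) (n : ℕ) : 0 < pCount (Xeta B) n := by
  refine (Set.ncard_pos (Set.toFinite _)).2 ⟨fun i => eta B (0 + (i : ℤ)), eta B, eta_mem_Xeta B, 0, fun i => rfl⟩

lemma logRatio_le_one (X : Set (ℤ → Bool)) (n : ℕ) : Real.logb 2 (pCount X n) / n ≤ 1 := by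
  refine div_le_one_of_le₀ ?_ (by positivity)
  rcases Nat.eq_zero_or_pos (pCount X n) with h | h
  · simp [h]
  · rw [Real.logb_le_iff_le_rpow (by norm_num) (by exact_mod_cast h), Real.rpow_natCast]
    exact_mod_cast pCount_le X n

lemma logRatio_nonneg (X : Set (ℤ → Bool)) (n : ℕ) : 0 ≤ Real.logb 2 (pCount X n) / n := by
  refine div_nonneg ?_ (by positivity)
  rcases Nat.eq_zero_or_pos (pCount X n) with h | h
  · simp [h]
  · exact Real.logb_nonneg (by norm_num) (by exact_mod_cast h)

/-- Some window of length `N` has at least `N (d̄(F_B) - d̄(F_{B*}) - ε)` positions on which `η` realises all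
patterns: take a pattern of positive mean of points of `F_B` divisible by small elements of `Dset B`,
and apply `kill_all` to any subset of it. -/
lemma exists_rich_block {B : Set ℕ} (hB : 0 ∉ B) {ε : ℝ} (hε : 0 < ε) (N : ℕ) :
    ∃ U : Finset ℕ, U ⊆ Finset.range N ∧
      N * (upperDensity (FB B) - upperDensity (FB (Bstar B)) - ε) ≤ U.card ∧
      ∀ S ⊆ U, ∃ m : ℤ, ∀ i ∈ U, (m + (i : ℤ) ∈ FB B ↔ i ∉ S) := by
  rw [FB_Bstar hB]
  obtain ⟨D, hM, hDB⟩ := exists_mean (FB B)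
  obtain ⟨K, hK⟩ := davenport_erdos (B ∪ Dset B) hε
  have hDK := hM.le_of_eventually _ _ hK
  -- the points of `FB B` that lie outside `FB (Bstar B)` because of a small `d ∈ Dset B`
  let G : Set ℤ := {n | n ∈ FB B ∧ ∃ d ∈ Dset B, d ≤ K ∧ (d : ℤ) ∣ n}
  have hG : upperDensity (FB B) - upperDensity (FB (B ∪ Dset B)) - ε ≤ D G := by
    have hsub : FB B ⊆ G ∪ FB (trunc (B ∪ Dset B) K) := by
      intro n hn
      by_cases h : ∃ d ∈ Dset B, d ≤ K ∧ (d : ℤ) ∣ n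
      · exact Or.inl ⟨hn, h⟩
      · right
        rintro ⟨b, ⟨hb | hb, hbK⟩, hdv⟩
        · exact hn ⟨b, hb, hdv⟩
        · exact h ⟨b, hb, hbK, hdv⟩
    have := (hM.mono hsub).trans (hM.union_le _ _)
    linarith
  obtain ⟨U, hUN, hUcard, hUpos⟩ := hM.exists_rich_pattern G N
  refine ⟨U, hUN, le_trans (by gcongr) hUcard, fun S hS => ?_⟩
  set Q : ℕ := (N + K).factorial with hQ
  have hQ0 : Q ≠ 0 := Nat.factorial_ne_zero _
  have hQpos : (0 : ℤ) < Q := by exact_mod_cast Nat.factorial_pos _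
  obtain ⟨r, -, hr⟩ := hM.exists_pos_fiber (Finset.range Q) (fun m : ℤ => (m % (Q : ℤ)).toNat) _
    (fun m _ => by
      have h1 := Int.emod_nonneg m hQpos.ne'
      have h2 := Int.emod_lt_of_pos m hQpos
      simp; omega) hUpos
  obtain ⟨m0, hm0⟩ : {m | m ∈ {m | ∀ j < N, (m + (j : ℤ) ∈ G ↔ j ∈ U)} ∧
      (m % (Q : ℤ)).toNat = r}.Nonempty := by
    rw [Set.nonempty_iff_ne_empty]
    intro h0; rw [h0, hM.empty] at hr; exact lt_irrefl _ hr
  have hmemG : ∀ i ∈ U, m0 + (i : ℤ) ∈ G := fun i hi =>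
    (hm0.1 i (Finset.mem_range.1 (hUN hi))).2 hi
  have hpos : 0 < D (freeSet B Q m0 (U \ S)) := by
    refine hr.trans_le (hM.mono ?_)
    rintro m ⟨hm, hmr⟩
    refine ⟨?_, fun j hj => ?_⟩
    · have h1 := Int.emod_nonneg m hQpos.ne'
      have h2 := Int.emod_nonneg m0 hQpos.ne'
      have h3 := hm0.2
      apply Int.dvd_of_emod_eq_zero
      rw [Int.sub_emod]
      have : m % (Q : ℤ) = m0 % (Q : ℤ) := by omega
      rw [this]; simp
    · have hjU := (Finset.mem_sdiff.1 hj).1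
      exact ((hm j (Finset.mem_range.1 (hUN hjU))).2 hjU).1
  obtain ⟨Q', m1, -, -, -, hpos', hb⟩ := kill_all hM hDB hQ0
    (fun k h1 h2 => Nat.dvd_factorial h1 (by omega))
    (Finset.sdiff_subset.trans hUN) hpos S (hS.trans hUN)
    (fun i hi h => (Finset.mem_sdiff.1 h).2 hi) (by
      intro i hi
      obtain ⟨-, d, hd, hdK, hdv⟩ := hmemG i (hS hi)
      refine ⟨d, hd, Nat.dvd_factorial ?_ (by omega), hdv⟩
      exact Nat.pos_of_ne_zero fun h0 => zero_notMem_Dset hB (h0 ▸ hd))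
  obtain ⟨m, hm⟩ : (freeSet B Q' m1 (U \ S)).Nonempty := by
    rw [Set.nonempty_iff_ne_empty]
    intro h0; rw [h0, hM.empty] at hpos'; exact lt_irrefl _ hpos'
  refine ⟨m, fun i hi => ⟨fun hfree hiS => ?_, fun hiS => hm.2 i (Finset.mem_sdiff.2 ⟨hi, hiS⟩)⟩⟩
  obtain ⟨b, hbB, hbQ, hbm⟩ := hb i hiS
  refine hfree ⟨b, hbB, ?_⟩
  have := dvd_add ((Int.natCast_dvd_natCast.2 hbQ).trans hm.1) hbm
  rwa [show m - m1 + (m1 + (i : ℤ)) = m + i by ring] at this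

theorem entropy_ge {B : Set ℕ} (hB : 0 ∉ B) :
    upperDensity (FB B) - upperDensity (FB (Bstar B)) ≤ topEnt (Xeta B) := by
  refine le_of_forall_pos_sub_le fun ε hε => ?_
  refine le_limsup_of_frequently_le (Eventually.frequently ?_)
    (isBoundedUnder_of ⟨1, fun n => logRatio_le_one _ n⟩)
  filter_upwards [eventually_gt_atTop 0] with N hN
  obtain ⟨U, hU, hcard, hS⟩ := exists_rich_block hB hε N
  have h1 := pCount_ge hU hS
  have hN' : (0 : ℝ) < N := by exact_mod_cast hN
  rw [le_div_iff₀ hN', mul_comm]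
  refine hcard.trans ?_
  rw [Real.le_logb_iff_rpow_le (by norm_num) (by exact_mod_cast pCount_pos B N), Real.rpow_natCast]
  exact_mod_cast h1

/-! ### Unique ergodicity and uniform densities -/

/-- Number of elements of `E` in the window `[a, a + n)`. -/
def wc (E : Set ℤ) (a : ℤ) (n : ℕ) : ℝ := ∑ i ∈ Finset.range n, ind E (a + (i : ℤ))

lemma cnt_eq_wc (E : Set ℤ) (L : ℕ) : cnt E L = wc E 1 L := by
  rw [cnt_eq_range]
  refine Finset.sum_congr rfl fun i _ => ?_
  congr 1; push_cast; ring

/-- The empirical measure of `x` along the window `[a, a + n)`. -/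
def emp (x : ℤ → Bool) (a : ℤ) (n : ℕ) : Measure (ℤ → Bool) :=
  (n : ENNReal)⁻¹ • ∑ i ∈ Finset.range n, Measure.dirac (fun k => x (k + (a + (i : ℤ))))

lemma emp_apply_of_forall {x : ℤ → Bool} {a : ℤ} {n : ℕ} (hn : 0 < n) {S : Set (ℤ → Bool)}
    (hS : MeasurableSet S) (h : ∀ m : ℤ, (fun k => x (k + m)) ∈ S) : emp x a n S = 1 := by
  have h0 : (n : ENNReal) ≠ 0 := by exact_mod_cast hn.ne'
  simp only [emp, Measure.smul_apply, Measure.coe_finsetSum, Finset.sum_apply,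
    Measure.dirac_apply' _ hS, Set.indicator_of_mem (h _), smul_eq_mul]
  simp [ENNReal.inv_mul_cancel h0]

lemma emp_isProb (x : ℤ → Bool) (a : ℤ) {n : ℕ} (hn : 0 < n) : IsProbabilityMeasure (emp x a n) :=
  ⟨emp_apply_of_forall hn MeasurableSet.univ fun _ => trivial⟩

lemma integral_emp (x : ℤ → Bool) (a : ℤ) (n : ℕ) (f : BoundedContinuousFunction (ℤ → Bool) ℝ) :
    ∫ y, f y ∂(emp x a n) = (∑ i ∈ Finset.range n, f (fun k => x (k + (a + (i : ℤ))))) / n := by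
  rw [emp, integral_smul_measure, integral_finsetSum_measure]
  · simp only [integral_dirac, ENNReal.toReal_inv, ENNReal.toReal_natCast, smul_eq_mul]
    ring
  · intro i _
    exact f.integrable _

lemma continuous_shift : Continuous shift := continuous_pi fun n => continuous_apply (n + 1)

/-- The coordinate function `y ↦ 1` if `y 0 = true`, and `0` otherwise. -/
def coord0 : BoundedContinuousFunction (ℤ → Bool) ℝ :=
  BoundedContinuousFunction.mkOfCompact
    ⟨fun y => if y 0 = true then (1 : ℝ) else 0,
      (continuous_of_discreteTopology (f := fun b : Bool => if b = true then (1 : ℝ) else 0)).comp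
        (continuous_apply (0 : ℤ))⟩

/-- Shifting moves the mean along a window of length `n` by at most `2‖f‖ / n`. -/
lemma emp_shift (x : ℤ → Bool) (a : ℤ) (n : ℕ) (f g : BoundedContinuousFunction (ℤ → Bool) ℝ)
    (hg : ∀ y, g y = f (shift y)) :
    |∫ y, g y ∂(emp x a n) - ∫ y, f y ∂(emp x a n)| ≤ 2 * ‖f‖ / n := by
  have h1 : ∀ i : ℕ, g (fun k => x (k + (a + (i : ℤ)))) =
      f (fun k => x (k + (a + ((i + 1 : ℕ) : ℤ)))) := by
    intro i
    rw [hg]; congr 1; funext k; simp only [shift]; congr 1; push_cast; ring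
  rw [integral_emp, integral_emp, ← sub_div, ← Finset.sum_sub_distrib]
  simp only [h1]
  rw [Finset.sum_range_sub (fun i : ℕ => f (fun k => x (k + (a + (i : ℤ))))) n, abs_div, Nat.abs_cast]
  gcongr
  refine (abs_sub _ _).trans ?_
  have := f.norm_coe_le_norm (fun k => x (k + (a + (n : ℤ))))
  have := f.norm_coe_le_norm (fun k => x (k + (a + ((0 : ℕ) : ℤ))))
  simp only [Real.norm_eq_abs] at *
  linarith

/-- Under unique ergodicity the density of ones in windows converges uniformly in the position of
the window: otherwise a weak-* limit of empirical measures along bad windows is a second invariant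
probability measure. -/
theorem uniform_density {x : ℤ → Bool} (h : ∃! μ, μ ∈ InvM (orbitClosure x)) :
    ∃ p : ℝ, ∀ ε > 0, ∃ n0 : ℕ, ∀ n ≥ n0, ∀ a : ℤ, |wc {i | x i = true} a n - p * n| ≤ ε * n := by
  obtain ⟨μ, -, huniq⟩ := h
  refine ⟨∫ y, coord0 y ∂μ, fun ε hε => ?_⟩
  by_contra hcon
  push Not at hcon
  choose n hn a ha using fun k : ℕ => hcon (k + 1)
  have hpos : ∀ k, 0 < n k := fun k => lt_of_lt_of_le (Nat.succ_pos k) (hn k)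
  have hnt : Tendsto (fun k => (n k : ℝ)) atTop atTop := by
    refine tendsto_natCast_atTop_atTop.comp (tendsto_atTop_mono (fun k => ?_) tendsto_id)
    exact (Nat.le_succ k).trans (hn k)
  let m : ℕ → ProbabilityMeasure (ℤ → Bool) := fun k => ⟨emp x (a k) (n k), emp_isProb x (a k) (hpos k)⟩
  let F : Ultrafilter ℕ := hyperfilter ℕ
  have hF : (F : Filter ℕ) ≤ atTop := by
    rw [← Nat.cofinite_eq_atTop]; exact hyperfilter_le_cofinite
  obtain ⟨ν, -, hν⟩ := isCompact_univ.ultrafilter_le_nhds (F.map m) (by simp)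
  have hν' : Tendsto m F (𝓝 ν) := hν
  have hweak := ProbabilityMeasure.tendsto_iff_forall_integral_tendsto.1 hν'
  have hmap : (ν : Measure (ℤ → Bool)).map shift = ν := by
    have : IsProbabilityMeasure ((ν : Measure (ℤ → Bool)).map shift) :=
      Measure.isProbabilityMeasure_map continuous_shift.measurable.aemeasurable
    refine ext_of_forall_integral_eq_of_IsFiniteMeasure fun f => ?_
    rw [integral_map continuous_shift.measurable.aemeasurable f.continuous.aestronglyMeasurable]
    let g : BoundedContinuousFunction (ℤ → Bool) ℝ := f.compContinuous ⟨shift, continuous_shift⟩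
    have hlim := (hweak g).sub (hweak f)
    have hz : Tendsto (fun k => ∫ y, g y ∂(emp x (a k) (n k)) - ∫ y, f y ∂(emp x (a k) (n k)))
        F (𝓝 0) := by
      refine squeeze_zero_norm (fun k => emp_shift x (a k) (n k) f g fun y => rfl) ?_
      exact (Tendsto.const_div_atTop hnt _).mono_left hF
    exact sub_eq_zero.1 (tendsto_nhds_unique hlim hz)
  have hcl : IsClosed (orbitClosure x) := isClosed_closure
  have hone : (ν : Measure (ℤ → Bool)) (orbitClosure x) = 1 := by
    refine le_antisymm prob_le_one ?_
    have h1 := ProbabilityMeasure.limsup_measure_closed_le_of_tendsto hν' hcl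
    have h2 : ∀ k, (m k : Measure (ℤ → Bool)) (orbitClosure x) = 1 := fun k =>
      emp_apply_of_forall (hpos k) hcl.measurableSet fun j => subset_closure ⟨j, rfl⟩
    simpa [h2] using h1
  have hνμ : (ν : Measure (ℤ → Bool)) = μ := huniq _ ⟨inferInstance, hmap, hone⟩
  have hc := hweak coord0
  rw [hνμ] at hc
  have hfin := (Metric.tendsto_nhds.1 hc ε hε).exists
  obtain ⟨k, hk⟩ := hfin
  refine absurd (ha k) (not_lt.2 ?_)
  have hkpos : (0 : ℝ) < n k := by exact_mod_cast hpos k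
  have hw : ∫ y, coord0 y ∂(m k : Measure (ℤ → Bool)) = wc {i | x i = true} (a k) (n k) / n k := by
    change ∫ y, coord0 y ∂(emp x (a k) (n k)) = _
    rw [integral_emp]
    congr 1
    refine Finset.sum_congr rfl fun i _ => ?_
    simp [coord0, ind]
  rw [hw, Real.dist_eq] at hk
  have : wc {i | x i = true} (a k) (n k) - (∫ y, coord0 y ∂μ) * n k =
      (wc {i | x i = true} (a k) (n k) / n k - ∫ y, coord0 y ∂μ) * n k := by
    field_simp
  rw [this, abs_mul, abs_of_pos hkpos]
  gcongr

lemma eta_ones (B : Set ℕ) : {i | eta B i = true} = FB B := by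
  ext i; exact eta_eq_true

lemma natDensity_of_uniform {E : Set ℤ} {p : ℝ}
    (h : ∀ ε > 0, ∃ n0 : ℕ, ∀ n ≥ n0, ∀ a : ℤ, |wc E a n - p * n| ≤ ε * n) : natDensity E p := by
  refine Metric.tendsto_atTop.2 fun ε hε => ?_
  obtain ⟨n0, h0⟩ := h (ε / 2) (by linarith)
  refine ⟨n0 + 1, fun n hn => ?_⟩
  have hpos : (0 : ℝ) < n := by exact_mod_cast (show 0 < n by omega)
  have h1 := h0 n (by omega) 1
  rw [Real.dist_eq, cnt_eq_wc]
  have : wc E 1 n / n - p = (wc E 1 n - p * n) / n := by field_simp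
  rw [this, abs_div, abs_of_pos hpos, div_lt_iff₀ hpos]
  nlinarith

lemma upperDensity_of_natDensity {E : Set ℤ} {p : ℝ} (h : natDensity E p) : upperDensity E = p :=
  h.limsup_eq

/-! ### The upper bound for the entropy -/

lemma ind_mono {E E' : Set ℤ} (h : E ⊆ E') (n : ℤ) : ind E n ≤ ind E' n := by
  by_cases hn : n ∈ E
  · rw [ind_of_mem hn, ind_of_mem (h hn)]
  · rw [ind_of_notMem hn]; exact ind_nonneg _ _

lemma wc_mono {E E' : Set ℤ} (h : E ⊆ E') (a : ℤ) (n : ℕ) : wc E a n ≤ wc E' a n :=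
  Finset.sum_le_sum fun _ _ => ind_mono h _

lemma wc_nonneg (E : Set ℤ) (a : ℤ) (n : ℕ) : 0 ≤ wc E a n :=
  Finset.sum_nonneg fun _ _ => ind_nonneg _ _

lemma wc_le (E : Set ℤ) (a : ℤ) (n : ℕ) : wc E a n ≤ n := by
  refine (Finset.sum_le_sum fun i _ => ind_le_one E _).trans ?_
  simp

lemma wc_eq_card (E : Set ℤ) (a : ℤ) (n : ℕ) :
    wc E a n = (((Finset.range n).filter fun i : ℕ => a + (i : ℤ) ∈ E).card : ℝ) := by
  rw [wc, Finset.card_filter]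
  push_cast
  rfl

lemma wc_add (E : Set ℤ) (a : ℤ) (n m : ℕ) : wc E a (n + m) = wc E a n + wc E (a + n) m := by
  unfold wc
  rw [Finset.sum_range_add]
  congr 1
  refine Finset.sum_congr rfl fun i _ => ?_
  congr 1; push_cast; ring

/-- Along every window the count of a periodic set is its density times the length, up to one
period. -/
lemma periodic_wc {E : Set ℤ} {P : ℕ} (hP : 0 < P) (hE : ∀ m : ℤ, m + P ∈ E ↔ m ∈ E) :
    ∃ d : ℝ, ∀ (a : ℤ) (n : ℕ), |wc E a n - d * n| ≤ P := by
  have hind : ∀ m : ℤ, ind E (m + P) = ind E m := fun m => by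
    simp only [ind, hE m]
  have hstep : ∀ a : ℤ, wc E (a + 1) P = wc E a P := by
    intro a
    have h1 := wc_add E a 1 P
    have h2 := wc_add E a P 1
    rw [add_comm 1 P, h2] at h1
    simp only [wc, Finset.sum_range_one, Nat.cast_zero, add_zero, Nat.cast_one, hind] at h1 ⊢
    linarith
  have hconst : ∀ a : ℤ, wc E a P = wc E 0 P := by
    intro a
    induction a using Int.induction_on with
    | zero => rfl
    | succ i ih => rw [hstep, ih]
    | pred i ih => rw [← ih, ← hstep, sub_add_cancel]
  set c := wc E 0 P with hc
  have hc0 : 0 ≤ c := wc_nonneg _ _ _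
  have hcP : c ≤ P := wc_le _ _ _
  have hq : ∀ (q : ℕ) (a : ℤ), wc E a (q * P) = q * c := by
    intro q
    induction q with
    | zero => intro a; simp [wc]
    | succ q ih => intro a; rw [Nat.succ_mul, wc_add, ih, hconst]; push_cast; ring
  have hP' : (0 : ℝ) < P := by exact_mod_cast hP
  refine ⟨c / P, fun a n => ?_⟩
  have hn : n = n / P * P + n % P := (Nat.div_add_mod' n P).symm
  have hr : ((n % P : ℕ) : ℝ) ≤ P := by exact_mod_cast (Nat.mod_lt n hP).le
  generalize n / P = q at hn
  generalize n % P = r at hn hr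
  rw [hn, wc_add, hq]
  have h1 := wc_nonneg E (a + ((q * P : ℕ) : ℤ)) r
  have h2 := wc_le E (a + ((q * P : ℕ) : ℤ)) r
  have h3 : c / P * ((q * P + r : ℕ) : ℝ) = q * c + c / P * r := by
    push_cast; field_simp
  have h4 : 0 ≤ c / P * r := by positivity
  have h5 : c / P * r ≤ r := by
    refine mul_le_of_le_one_left (by positivity) ?_
    rwa [div_le_one hP']
  rw [h3, abs_le]
  constructor <;> linarith

lemma periodic_bound {E : Set ℤ} {P : ℕ} (hP : 0 < P) (hE : ∀ m : ℤ, m + P ∈ E ↔ m ∈ E) {u : ℝ}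
    (hu : ∀ᶠ x : ℕ in atTop, cnt E x ≤ u * x) (a : ℤ) (n : ℕ) : wc E a n ≤ u * n + P := by
  obtain ⟨d, hd⟩ := periodic_wc hP hE
  have hdu : d ≤ u := by
    refine le_of_forall_pos_le_add fun ε hε => ?_
    obtain ⟨N, hN⟩ := exists_nat_gt ((P : ℝ) / ε)
    obtain ⟨x, hx, hxN, hx0⟩ := (hu.and ((eventually_ge_atTop N).and (eventually_gt_atTop 0))).exists
    have hx0' : (0 : ℝ) < x := by exact_mod_cast hx0
    have h1 := (abs_le.1 (hd 1 x)).1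
    rw [← cnt_eq_wc] at h1
    have h2 : (P : ℝ) ≤ ε * x := by
      have : (N : ℝ) ≤ x := by exact_mod_cast hxN
      rw [div_lt_iff₀ hε] at hN
      nlinarith
    have h3 : d * x ≤ (u + ε) * x := by linarith
    exact le_of_mul_le_mul_right h3 hx0'
  have h1 := (abs_le.1 (hd a n)).2
  have : d * n ≤ u * n := by gcongr
  linarith

lemma FB_trunc_periodic {A : Set ℕ} (hA : 0 ∉ A) (K : ℕ) (m : ℤ) :
    m + (K.factorial : ℕ) ∈ FB (trunc A K) ↔ m ∈ FB (trunc A K) := by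
  simp only [FB, MB, Set.mem_ofPred_eq, not_iff_not]
  refine exists_congr fun b => and_congr_right fun hb => ?_
  have hb0 : 0 < b := Nat.pos_of_ne_zero fun h => hA (h ▸ hb.1)
  exact (Int.dvd_add_left (Int.natCast_dvd_natCast.2 (Nat.dvd_factorial hb0 hb.2)))

/-- Density bounds for the free sets of a truncation, uniform in the window. -/
lemma exists_trunc_bound {A : Set ℕ} (hA : 0 ∉ A) {ε : ℝ} (hε : 0 < ε) :
    ∃ K0 : ℕ, ∀ K ≥ K0, ∀ (a : ℤ) (n : ℕ),
      wc (FB (trunc A K)) a n ≤ (upperDensity (FB A) + ε) * n + K.factorial := by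
  obtain ⟨K0, h0⟩ := davenport_erdos A hε
  refine ⟨K0, fun K hK a n => periodic_bound (Nat.factorial_pos K) (FB_trunc_periodic hA K) ?_ a n⟩
  filter_upwards [h0] with x hx
  refine le_trans ?_ hx
  rw [cnt_eq_wc, cnt_eq_wc]
  exact wc_mono (FB_anti (trunc_mono A hK)) _ _

/-- Every block of `X_η` already occurs in `η`. -/
lemma exists_of_mem_blocks {B : Set ℕ} {n : ℕ} {w : Fin n → Bool} (hw : w ∈ blocks (Xeta B) n) :
    ∃ a : ℤ, ∀ i : Fin n, w i = eta B (a + ((i : ℕ) : ℤ)) := by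
  obtain ⟨x, hx, m, hm⟩ := hw
  have hopen : IsOpen (⋂ i : Fin n, (fun y : ℤ → Bool => y (m + ((i : ℕ) : ℤ))) ⁻¹' {w i}) :=
    isOpen_iInter_of_finite fun i =>
      (isOpen_discrete _).preimage (continuous_apply _)
  obtain ⟨y, hy, j, rfl⟩ := mem_closure_iff.1 hx _ hopen (Set.mem_iInter.2 fun i => hm i)
  refine ⟨m + j, fun i => ?_⟩
  have := Set.mem_iInter.1 hy i
  simp only [Set.mem_preimage, Set.mem_singleton_iff] at this
  rw [← this]; congr 1; ring

/-- The subsets of `{0, …, n - 1}` with at most `δ n` elements. -/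
def smallSets (δ : ℝ) (n : ℕ) : Finset (Finset ℕ) :=
  (Finset.range n).powerset.filter fun S => (S.card : ℝ) ≤ δ * n

/-- Weighting a set `S` by `t ^ |S|` bounds the number of small sets. -/
lemma smallSets_card {δ t : ℝ} (ht : 0 < t) (ht1 : t < 1) (n : ℕ) :
    ((smallSets δ n).card : ℝ) ≤ (1 + t) ^ n * t ^ (-(δ * n)) := by
  have h1 : ((smallSets δ n).card : ℝ) * t ^ (δ * n) ≤ (1 + t) ^ n := by
    calc ((smallSets δ n).card : ℝ) * t ^ (δ * n) = ∑ S ∈ smallSets δ n, t ^ (δ * n) := by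
          rw [Finset.sum_const, nsmul_eq_mul]
      _ ≤ ∑ S ∈ smallSets δ n, t ^ S.card := by
          refine Finset.sum_le_sum fun S hS => ?_
          rw [← Real.rpow_natCast]
          exact Real.rpow_le_rpow_of_exponent_ge ht ht1.le (Finset.mem_filter.1 hS).2
      _ ≤ ∑ S ∈ (Finset.range n).powerset, t ^ S.card :=
          Finset.sum_le_sum_of_subset_of_nonneg (Finset.filter_subset _ _) fun _ _ _ => by positivity
      _ = (1 + t) ^ n := by
          have := Finset.sum_pow_mul_eq_add_pow t 1 (Finset.range n)
          simp only [one_pow, mul_one, Finset.card_range] at this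
          rw [this, add_comm]
  rw [Real.rpow_neg ht.le, ← div_eq_mul_inv, le_div_iff₀ (by positivity)]
  exact h1

/-- Positions in `[0, n)` whose translate by `a` lies in `E`. -/
def win (E : Set ℤ) (a : ℤ) (n : ℕ) : Finset ℕ := (Finset.range n).filter fun i : ℕ => a + (i : ℤ) ∈ E

lemma mem_win {E : Set ℤ} {a : ℤ} {n i : ℕ} : i ∈ win E a n ↔ i < n ∧ a + (i : ℤ) ∈ E := by
  simp [win]

lemma win_mono {E E' : Set ℤ} (h : E ⊆ E') (a : ℤ) (n : ℕ) : win E a n ⊆ win E' a n := by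
  intro i hi; rw [mem_win] at *; exact ⟨hi.1, h hi.2⟩

lemma win_card (E : Set ℤ) (a : ℤ) (n : ℕ) : ((win E a n).card : ℝ) = wc E a n :=
  (wc_eq_card E a n).symm

/-- A set of ones sitting inside a `P`-periodic set `E1`, which fills all but few positions of a
`P`-periodic subset `E2`, is determined by the phase modulo `P`, its trace on `E1 \ E2` and the few
positions of `E2` that it misses. -/
lemma count_blocks {B : Set ℕ} {E1 E2 : Set ℤ} {P n : ℕ} (hP : 0 < P)
    (h1 : ∀ m : ℤ, m + P ∈ E1 ↔ m ∈ E1) (h2 : ∀ m : ℤ, m + P ∈ E2 ↔ m ∈ E2)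
    (hB1 : FB B ⊆ E1) {δ M : ℝ}
    (hM : ∀ a : ℤ, ((win E1 a n \ win E2 a n).card : ℝ) ≤ M)
    (hδ : ∀ a : ℤ, ((win E2 a n \ win (FB B) a n).card : ℝ) ≤ δ * n) :
    (pCount (Xeta B) n : ℝ) ≤ P * (2 ^ M * (smallSets δ n).card) := by
  have hper : ∀ {E : Set ℤ}, (∀ m : ℤ, m + P ∈ E ↔ m ∈ E) → ∀ (a : ℤ), win E a n = win E (a % P) n := by
    intro E hE a
    have hq : ∀ (q m : ℤ), m + P * q ∈ E ↔ m ∈ E := by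
      intro q
      induction q using Int.induction_on with
      | zero => intro m; simp
      | succ i ih => intro m; rw [mul_add, mul_one, ← add_assoc, hE, ih]
      | pred i ih => intro m; rw [← hE, ← ih m]; ring_nf
    ext i
    rw [mem_win, mem_win, ← hq (a / P) (a % P + i)]
    have := Int.emod_add_mul_ediv a P
    rw [show a % P + i + P * (a / P) = a + (i : ℤ) by linarith]
  let T : ℕ → Finset (Fin n → Bool) := fun r =>
    ((win E1 r n \ win E2 r n).powerset ×ˢ smallSets δ n).image fun S => fun i : Fin n =>
      decide ((i : ℕ) ∈ S.1 ∨ ((i : ℕ) ∈ win E2 r n ∧ (i : ℕ) ∉ S.2))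
  have hsub : blocks (Xeta B) n ⊆ (((Finset.range P).biUnion T : Finset _) : Set (Fin n → Bool)) := by
    intro w hw
    obtain ⟨a, ha⟩ := exists_of_mem_blocks hw
    have hP' : (0 : ℤ) < P := by exact_mod_cast hP
    have hr0 := Int.emod_nonneg a hP'.ne'
    have hrP := Int.emod_lt_of_pos a hP'
    have hr : ((a % P).toNat : ℤ) = a % P := Int.toNat_of_nonneg hr0
    simp only [Finset.coe_biUnion, Set.mem_iUnion, Finset.mem_coe]
    refine ⟨(a % P).toNat, Finset.mem_range.2 (by omega), ?_⟩
    simp only [T, hr, ← hper h1, ← hper h2]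
    refine Finset.mem_image.2 ⟨(win (FB B) a n ∩ (win E1 a n \ win E2 a n), win E2 a n \ win (FB B) a n),
      Finset.mem_product.2 ⟨Finset.mem_powerset.2 Finset.inter_subset_right,
        Finset.mem_filter.2 ⟨Finset.mem_powerset.2 fun i hi => ?_, hδ a⟩⟩, ?_⟩
    · exact Finset.mem_range.2 (mem_win.1 (Finset.mem_sdiff.1 hi).1).1
    · funext i
      rw [ha, Bool.eq_iff_iff, decide_eq_true_iff, eta_eq_true]
      simp only [Finset.mem_inter, Finset.mem_sdiff, mem_win, i.2, true_and]
      have := @hB1 (a + ((i : ℕ) : ℤ))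
      tauto
  have hcard : ∀ r ∈ Finset.range P, (T r).card ≤ ⌊(2 : ℝ) ^ M * (smallSets δ n).card⌋₊ := by
    intro r _
    refine Nat.le_floor ?_
    calc ((T r).card : ℝ) ≤ (((win E1 r n \ win E2 r n).powerset ×ˢ smallSets δ n).card : ℝ) := by
          exact_mod_cast Finset.card_image_le
      _ = 2 ^ ((win E1 r n \ win E2 r n).card : ℝ) * (smallSets δ n).card := by
          rw [Finset.card_product, Finset.card_powerset, Real.rpow_natCast]; push_cast; rfl
      _ ≤ _ := by
          gcongr
          · norm_num
          · exact hM r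
  have hle : pCount (Xeta B) n ≤ P * ⌊(2 : ℝ) ^ M * (smallSets δ n).card⌋₊ := by
    unfold pCount
    refine (Set.ncard_le_ncard hsub (Finset.finite_toSet _)).trans ?_
    rw [Set.ncard_coe_finset]
    simpa using Finset.card_biUnion_le_card_mul _ _ _ hcard
  calc (pCount (Xeta B) n : ℝ) ≤ P * (⌊(2 : ℝ) ^ M * (smallSets δ n).card⌋₊ : ℝ) := by exact_mod_cast hle
    _ ≤ _ := by
      gcongr
      exact Nat.floor_le (by positivity)

/-- A block of length `n` of `η` is encoded by `count_blocks`, with `E1` and `E2` the integers free of the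
elements up to `K` of `B` and of `B ∪ Dset B`. Uniformity of the density of `F_{B*}` makes `E2` almost
full in every window, and leaves about `(d̄(F_B) - p) n` positions in `E1 \ E2`. -/
theorem entropy_le {B : Set ℕ} (hB : 0 ∉ B) {p : ℝ}
    (h : ∀ ε > 0, ∃ n0 : ℕ, ∀ n ≥ n0, ∀ a : ℤ, |wc (FB (Bstar B)) a n - p * n| ≤ ε * n) :
    topEnt (Xeta B) ≤ upperDensity (FB B) - p := by
  have hp : upperDensity (FB (Bstar B)) = p := upperDensity_of_natDensity (natDensity_of_uniform h)
  rw [FB_Bstar hB] at h hp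
  refine le_of_forall_pos_le_add fun θ hθ => ?_
  -- `η` is the error allowed in each of the three factors of the block count.
  obtain ⟨η, hη, hηθ⟩ : ∃ η > 0, 3 * η = θ := ⟨θ / 3, by positivity, by ring⟩
  have hl2 : 0 < Real.log 2 := Real.log_pos (by norm_num)
  obtain ⟨t, ht, ht1, htη⟩ : ∃ t : ℝ, 0 < t ∧ t < 1 ∧ Real.logb 2 (1 + t) ≤ η := by
    refine ⟨min (1 / 2) (η * Real.log 2), by positivity, (min_le_left _ _).trans_lt (by norm_num), ?_⟩
    have h0 : 0 < min (1 / 2) (η * Real.log 2) := by positivity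
    rw [Real.logb, div_le_iff₀ hl2]
    have := Real.log_le_sub_one_of_pos (show 0 < 1 + min (1 / 2) (η * Real.log 2) by positivity)
    linarith [min_le_right (1 / 2 : ℝ) (η * Real.log 2)]
  have hlt : Real.logb 2 t < 0 := Real.logb_neg (by norm_num) ht ht1
  obtain ⟨ε, hε, hεη⟩ : ∃ ε > 0, 3 * ε * (1 - Real.logb 2 t) = η := by
    have : 0 < 1 - Real.logb 2 t := by linarith
    exact ⟨η / (3 * (1 - Real.logb 2 t)), by positivity, by field_simp⟩
  have hC : 0 ∉ B ∪ Dset B := by rintro (h | h); exacts [hB h, zero_notMem_Dset hB h]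
  obtain ⟨K1, hK1⟩ := exists_trunc_bound hB hε
  obtain ⟨K2, hK2⟩ := exists_trunc_bound hC hε
  obtain ⟨n0, hn0⟩ := h ε hε
  rw [hp] at hK2
  set K := max K1 K2 with hK
  have hP : 0 < K.factorial := Nat.factorial_pos K
  set P := K.factorial
  refine limsup_le_of_le (isCoboundedUnder_le_of_le atTop (fun n => logRatio_nonneg _ n)) ?_
  have e1 := (tendsto_natCast_atTop_atTop (R := ℝ)).eventually_ge_atTop ((P : ℝ) / ε)
  have e2 := (tendsto_natCast_atTop_atTop (R := ℝ)).eventually_ge_atTop (Real.logb 2 P / η)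
  filter_upwards [eventually_ge_atTop n0, eventually_gt_atTop 0, e1, e2] with n hn hpos hn1 hn2
  have hn' : (0 : ℝ) < n := by exact_mod_cast hpos
  rw [div_le_iff₀ hε] at hn1
  rw [div_le_iff₀ hη] at hn2
  have hsub : FB (trunc (B ∪ Dset B) K) ⊆ FB (trunc B K) :=
    FB_anti fun b hb => ⟨Or.inl hb.1, hb.2⟩
  have hsC : FB (B ∪ Dset B) ⊆ FB (trunc (B ∪ Dset B) K) := FB_anti (trunc_subset _ _)
  have hCB : FB (B ∪ Dset B) ⊆ FB B := FB_anti Set.subset_union_left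
  have hlow : ∀ a : ℤ, (p - ε) * n ≤ wc (FB (B ∪ Dset B)) a n := fun a => by
    have := (abs_le.1 (hn0 n hn a)).1; linarith
  have hcount := count_blocks (n := n) (M := (upperDensity (FB B) - p + 3 * ε) * n) (δ := 3 * ε) hP
    (FB_trunc_periodic hB K) (FB_trunc_periodic hC K) (FB_anti (trunc_subset _ _))
    (fun a => by
      rw [Finset.cast_card_sdiff (win_mono hsub a n), win_card, win_card]
      have := hK1 K (le_max_left _ _) a n
      have := wc_mono hsC a n
      have := hlow a
      linarith)
    (fun a => by
      have h1 : win (FB (trunc (B ∪ Dset B) K)) a n \ win (FB B) a n ⊆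
          win (FB (trunc (B ∪ Dset B) K)) a n \ win (FB (B ∪ Dset B)) a n :=
        Finset.sdiff_subset_sdiff subset_rfl (win_mono hCB a n)
      have h2 : ((win (FB (trunc (B ∪ Dset B) K)) a n \ win (FB B) a n).card : ℝ) ≤ _ :=
        Nat.cast_le.2 (Finset.card_le_card h1)
      rw [Finset.cast_card_sdiff (win_mono hsC a n), win_card, win_card] at h2
      have := hK2 K (le_max_right _ _) a n
      have := hlow a
      linarith)
  have hfin : (pCount (Xeta B) n : ℝ) ≤ P * (2 ^ ((upperDensity (FB B) - p + 3 * ε) * n) *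
      ((1 + t) ^ n * t ^ (-(3 * ε * n)))) := by
    refine hcount.trans ?_
    gcongr
    exact smallSets_card ht ht1 n
  have hpc : (0 : ℝ) < pCount (Xeta B) n := by exact_mod_cast pCount_pos B n
  have hP' : (0 : ℝ) < P := by exact_mod_cast hP
  have hlog := Real.logb_le_logb_of_le (b := 2) (by norm_num) hpc hfin
  have hx2 : (0 : ℝ) < 2 ^ ((upperDensity (FB B) - p + 3 * ε) * n) := by positivity
  have hx4 : 0 < t ^ (-(3 * ε * n)) := by positivity
  have hx3 : 0 < (1 + t) ^ n := by positivity
  rw [Real.logb_mul hP'.ne' (by positivity), Real.logb_mul hx2.ne' (by positivity),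
    Real.logb_mul hx3.ne' hx4.ne', Real.logb_rpow (by norm_num) (by norm_num), Real.logb_pow,
    Real.logb_rpow_eq_mul_logb_of_pos ht] at hlog
  rw [div_le_iff₀ hn']
  have h5 : (n : ℝ) * Real.logb 2 (1 + t) ≤ η * n := by
    rw [mul_comm]; gcongr
  have h6 : (upperDensity (FB B) - p + 3 * ε) * n + -(3 * ε * n) * Real.logb 2 t =
      (upperDensity (FB B) - p + η) * n := by rw [← hεη]; ring
  rw [← hηθ]
  linarith

/-- `h(X_η) ≥ d̄(F_𝓑) − d̄(F_{𝓑*})`, and if `X_{η*}` is uniquely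
ergodic then the natural density `d(F_{𝓑*})` exists and
`h(X_η) = d̄(F_𝓑) − d(F_{𝓑*})`. -/
theorem statement5 (B : Set ℕ) (hB : 0 ∉ B) :
    upperDensity (FB B) - upperDensity (FB (Bstar B)) ≤ topEnt (Xeta B) ∧
    ((∃! μ, μ ∈ InvM (Xeta (Bstar B))) →
      ∃ dstar : ℝ, natDensity (FB (Bstar B)) dstar ∧
        topEnt (Xeta B) = upperDensity (FB B) - dstar) := by
  refine ⟨entropy_ge hB, fun h => ?_⟩
  obtain ⟨p, hp⟩ := uniform_density h
  rw [eta_ones] at hp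
  have hd := natDensity_of_uniform hp
  refine ⟨p, hd, le_antisymm (entropy_le hB hp) ?_⟩
  have := entropy_ge hB
  rwa [upperDensity_of_natDensity hd] at this

end BFree
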